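/- For every dimension d ≥ 1 there exists p₀ such that for every p ≥ p₀ there exists N₀ (depending on p) such that for every integer N ≥ N₀ there exists γ₀ ∈ (0,1) (depending on N) such that for every γ ∈ (0, γ₀], every finite rectangle Λ ⊂ ℤ^d, every choice, for each potential configuration, of an orthonormal basis (φ_β) of ℝ^Λ consisting of eigenvectors of H, and all x, y ∈ Λ, the eigenfunction correlator satisfies 𝔼 Σ_β |φ_β(x) φ_β(y)| ≤ (max(|x−y|, 1))^{−(p/2 − d − 1)}. -/

import Mathlib

noncomputable section

open scoped BigOperators

/-- ℓ¹ distance on `ℤ^d` (natural-number valued). -/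
def dist1 {d : ℕ} (x y : Fin d → ℤ) : ℕ := ∑ i, (x i - y i).natAbs

lemma dist1_comm {d : ℕ} (x y : Fin d → ℤ) : dist1 x y = dist1 y x :=
  Finset.sum_congr rfl fun i _ => by rw [← Int.natAbs_neg, neg_sub]

/-- ℓ¹ diameter of a finite subset of `ℤ^d`. -/
def diam1 {d : ℕ} (Λ : Finset (Fin d → ℤ)) : ℕ := (Λ ×ˢ Λ).sup fun p => dist1 p.1 p.2

/-- `Λ` is a (possibly empty) rectangle: a product of integer intervals. -/
def IsRect {d : ℕ} (Λ : Finset (Fin d → ℤ)) : Prop := ∃ a b : Fin d → ℤ, Λ = Finset.Icc a b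

/-- Entry of the Anderson Hamiltonian `H = H₀ - γ J` with potential `v`. -/
def hamEntry (d : ℕ) (γ : ℝ) (v : (Fin d → ℤ) → ℝ) (x y : Fin d → ℤ) : ℝ :=
  (if x = y then 2*d*γ + v x else 0) - γ * (if dist1 x y = 1 then 1 else 0)

/-- The Anderson Hamiltonian restricted to a finite set `X ⊂ ℤ^d`. -/
def hamOn (d : ℕ) (γ : ℝ) (v : (Fin d → ℤ) → ℝ) (X : Finset (Fin d → ℤ)) :
    Matrix X X ℝ := Matrix.of fun x y => hamEntry d γ v x y

lemma hamOn_isHermitian (d : ℕ) (γ : ℝ) (v : (Fin d → ℤ) → ℝ) (X : Finset (Fin d → ℤ)) :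
    (hamOn d γ v X).IsHermitian := by
  ext x y
  simp only [Matrix.conjTranspose_apply, hamOn, Matrix.of_apply, hamEntry, star_trivial]
  rw [dist1_comm]
  by_cases h : (y : Fin d → ℤ) = (x : Fin d → ℤ)
  · rw [if_pos h, if_pos h.symm, h]
  · rw [if_neg h, if_neg (show ¬((x : Fin d → ℤ) = (y : Fin d → ℤ)) from fun hh => h hh.symm)]

open scoped Classical in
/-- Number of eigenvalues (with multiplicity) of a Hermitian matrix in `[a,b]`. -/
def countEigIn {n : Type*} [Fintype n] [DecidableEq n] {M : Matrix n n ℝ}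
    (hM : M.IsHermitian) (a b : ℝ) : ℕ :=
  (Finset.univ.filter fun i => hM.eigenvalues i ∈ Set.Icc a b).card

/-- Expectation with respect to the uniform measure on a finite configuration space. -/
def expect {Ω : Type*} [Fintype Ω] (f : Ω → ℝ) : ℝ := (∑ ω, f ω) / Fintype.card Ω

open scoped Classical in
/-- Probability of an event with respect to the uniform measure on a finite space. -/
def prob {Ω : Type*} [Fintype Ω] (A : Ω → Prop) : ℝ :=
  ((Finset.univ.filter A).card : ℝ) / Fintype.card Ω

/-- The random potential determined by a configuration `ω : Λ → Fin N`:
the value at `x ∈ Λ` is `ω x / (N-1) ∈ {0, 1/(N-1), …, 1}`. -/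
def potential {d : ℕ} (N : ℕ) (Λ : Finset (Fin d → ℤ)) (ω : Λ → Fin N) :
    (Fin d → ℤ) → ℝ := fun x => if h : x ∈ Λ then (ω ⟨x, h⟩ : ℕ) / ((N : ℝ) - 1) else 0


namespace AL
variable {d : ℕ}

/-- sup-norm nearness: `w` lies within sup distance `r` of `x`. -/
def Nr (x w : Fin d → ℤ) (r : ℤ) : Prop := ∀ i, |w i - x i| ≤ r

/-- sup-norm ball. -/
def Bx (x : Fin d → ℤ) (r : ℤ) : Finset (Fin d → ℤ) :=
  Finset.Icc (fun i => x i - r) (fun i => x i + r)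

lemma mem_Bx {x w : Fin d → ℤ} {r : ℤ} : w ∈ Bx x r ↔ Nr x w r := by
  simp only [Bx, Finset.mem_Icc, Pi.le_def, Nr, abs_le]
  constructor
  · rintro ⟨h1, h2⟩ i
    have := h1 i; have := h2 i; omega
  · intro h
    exact ⟨fun i => by have := h i; omega, fun i => by have := h i; omega⟩

lemma card_Bx (x : Fin d → ℤ) (r : ℕ) : (Bx x r).card = (2 * r + 1) ^ d := by
  rw [Bx, Pi.card_Icc]
  have : ∀ i, (Finset.Icc (x i - (r : ℤ)) (x i + r)).card = 2 * r + 1 := by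
    intro i
    rw [Int.card_Icc]; omega
  simp [this]

lemma Nr.trans {x y z : Fin d → ℤ} {r s t : ℤ} (h : Nr x y r) (h' : Nr y z s) (ht : r + s ≤ t) :
    Nr x z t := by
  intro i
  have h1 := h i; have h2 := h' i
  rw [abs_le] at *
  omega

lemma Nr.symm {x y : Fin d → ℤ} {r : ℤ} (h : Nr x y r) : Nr y x r := by
  intro i
  have h1 := h i
  rw [abs_le] at *
  omega

lemma Nr.mono {x y : Fin d → ℤ} {r s : ℤ} (h : Nr x y r) (hs : r ≤ s) : Nr x y s :=
  fun i => (h i).trans hs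

lemma Nr.refl (x : Fin d → ℤ) {r : ℤ} (hr : 0 ≤ r) : Nr x x r := by
  intro i; simpa using hr

/-- neighbours of `w` inside `Λ`. -/
def nb (Λ : Finset (Fin d → ℤ)) (w : Fin d → ℤ) : Finset (Fin d → ℤ) :=
  Λ.filter fun y => dist1 w y = 1

lemma Nr_of_dist1 {w y : Fin d → ℤ} (h : dist1 w y = 1) : Nr w y 1 := by
  intro i
  have : (w i - y i).natAbs ≤ dist1 w y :=
    Finset.single_le_sum (f := fun i => (w i - y i).natAbs) (fun _ _ => Nat.zero_le _)
      (Finset.mem_univ i)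
  rw [h] at this
  rw [abs_le]; omega

lemma nb_Nr {Λ : Finset (Fin d → ℤ)} {w y : Fin d → ℤ} (h : y ∈ nb Λ w) : Nr w y 1 :=
  Nr_of_dist1 (Finset.mem_filter.1 h).2

lemma nb_mem {Λ : Finset (Fin d → ℤ)} {w y : Fin d → ℤ} (h : y ∈ nb Λ w) : y ∈ Λ :=
  (Finset.mem_filter.1 h).1

lemma card_nb (Λ : Finset (Fin d → ℤ)) (w : Fin d → ℤ) : (nb Λ w).card ≤ 3 ^ d := by
  have : nb Λ w ⊆ Bx w (1 : ℕ) := fun y hy => mem_Bx.2 (by simpa using nb_Nr hy)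
  have h := Finset.card_le_card this
  rw [card_Bx] at h
  simpa using h

/-- The eigenvalue equation at the site `w`. -/
def Sol (Λ : Finset (Fin d → ℤ)) (γ : ℝ) (v : (Fin d → ℤ) → ℝ) (E : ℝ) (u : (Fin d → ℤ) → ℝ)
    (w : Fin d → ℤ) : Prop :=
  (2 * d * γ + v w - E) * u w = γ * ∑ y ∈ nb Λ w, u y

lemma Sol.congr {Λ : Finset (Fin d → ℤ)} {γ : ℝ} {v v' : (Fin d → ℤ) → ℝ} {E : ℝ}
    {u : (Fin d → ℤ) → ℝ} {w : Fin d → ℤ} (h : Sol Λ γ v E u w) (hv : v w = v' w) :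
    Sol Λ γ v' E u w := by
  unfold Sol at *; rw [← hv]; exact h

lemma Sol.smul {Λ : Finset (Fin d → ℤ)} {γ : ℝ} {v : (Fin d → ℤ) → ℝ} {E : ℝ}
    {u : (Fin d → ℤ) → ℝ} {w : Fin d → ℤ} (h : Sol Λ γ v E u w) (c : ℝ) :
    Sol Λ γ v E (fun z => c * u z) w := by
  unfold Sol at *
  rw [← Finset.mul_sum]
  linear_combination c * h

/-- goodness of the box of radius `s-1` about `x`. -/
def Good (Λ : Finset (Fin d → ℤ)) (γ : ℝ) (v : (Fin d → ℤ) → ℝ) (E : ℝ) (s : ℕ) (δ : ℝ)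
    (x : Fin d → ℤ) : Prop :=
  ∀ (u : (Fin d → ℤ) → ℝ) (M : ℝ),
    (∀ w ∈ Λ, Nr x w (s - 1) → Sol Λ γ v E u w) →
    (∀ w ∈ Λ, Nr x w s → |u w| ≤ M) → |u x| ≤ δ * M

lemma Good.congr {Λ : Finset (Fin d → ℤ)} {γ : ℝ} {v v' : (Fin d → ℤ) → ℝ} {E : ℝ} {s : ℕ} {δ : ℝ}
    {x : Fin d → ℤ} (h : Good Λ γ v E s δ x) (hv : ∀ w ∈ Λ, Nr x w (s - 1) → v w = v' w) :
    Good Λ γ v' E s δ x := by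
  intro u M h1 h2
  exact h u M (fun w hw hn => (h1 w hw hn).congr (hv w hw hn).symm) h2

lemma sol_sum_le {Λ : Finset (Fin d → ℤ)} {u : (Fin d → ℤ) → ℝ} {w : Fin d → ℤ} {M : ℝ}
    (hM0 : 0 ≤ M) (hM : ∀ y ∈ nb Λ w, |u y| ≤ M) : |∑ y ∈ nb Λ w, u y| ≤ 3 ^ d * M := by
  calc |∑ y ∈ nb Λ w, u y| ≤ ∑ y ∈ nb Λ w, |u y| := Finset.abs_sum_le_sum_abs _ _
    _ ≤ ∑ y ∈ nb Λ w, M := Finset.sum_le_sum hM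
    _ = (nb Λ w).card * M := by simp
    _ ≤ 3 ^ d * M := by
      apply mul_le_mul_of_nonneg_right _ hM0
      exact_mod_cast card_nb Λ w

/-- Nonresonant boxes are good. -/
lemma good_base {Λ : Finset (Fin d → ℤ)} {γ : ℝ} {v : (Fin d → ℤ) → ℝ} {E : ℝ} {s : ℕ} {θ : ℝ}
    {x : Fin d → ℤ} (hx : x ∈ Λ) (hγ : 0 < γ) (hθ : 0 < θ) (hγθ : 2 * d * γ ≤ θ / 2)
    (h : ∀ w ∈ Λ, Nr x w (s - 1) → θ ≤ |v w - E|) :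
    Good Λ γ v E s ((2 * γ * 3 ^ d / θ) ^ s) x := by
  intro u M h1 h2
  have hM : 0 ≤ M := (abs_nonneg _).trans (h2 x hx (Nr.refl x (by positivity)))
  set c := 2 * γ * 3 ^ d / θ with hc
  have hc0 : 0 ≤ c := by positivity
  have key : ∀ j : ℕ, j ≤ s → ∀ w ∈ Λ, Nr x w ((s : ℤ) - j) → |u w| ≤ c ^ j * M := by
    intro j
    induction j with
    | zero => intro _ w hw hn; simpa using h2 w hw (by simpa using hn)
    | succ j ih =>
      intro hj w hw hn
      have e1 := h1 w hw (hn.mono (by push_cast; omega))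
      have e2 := h w hw (hn.mono (by push_cast; omega))
      have e3 : |∑ y ∈ nb Λ w, u y| ≤ 3 ^ d * (c ^ j * M) := by
        apply sol_sum_le (by positivity)
        intro y hy
        exact ih (by omega) y (nb_mem hy) (hn.trans (nb_Nr hy) (by push_cast; omega))
      have e4 : θ / 2 ≤ |2 * d * γ + v w - E| := by
        have : |v w - E| ≤ |2 * d * γ + v w - E| + |2 * d * γ| := by
          have := abs_sub (2 * d * γ + v w - E) (2 * d * γ)
          calc |v w - E| = |2 * d * γ + v w - E - 2 * d * γ| := by ring_nf
            _ ≤ _ := this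
        rw [abs_of_nonneg (by positivity : (0:ℝ) ≤ 2 * d * γ)] at this
        linarith
      have e5 : |2 * d * γ + v w - E| * |u w| ≤ γ * (3 ^ d * (c ^ j * M)) := by
        rw [← abs_mul, e1, abs_mul, abs_of_pos hγ]
        exact mul_le_mul_of_nonneg_left e3 hγ.le
      have e6 : θ / 2 * |u w| ≤ γ * (3 ^ d * (c ^ j * M)) :=
        (mul_le_mul_of_nonneg_right e4 (abs_nonneg _)).trans e5
      have e7 : θ / 2 * (c ^ (j + 1) * M) = γ * (3 ^ d * (c ^ j * M)) := by
        rw [pow_succ, hc]; field_simp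
      rw [← e7] at e6
      exact le_of_mul_le_mul_left e6 (by positivity)
  simpa using key s le_rfl x hx (Nr.refl x (by simp))

/-- The quasi-mode event. -/
def Wq (Λ : Finset (Fin d → ℤ)) (γ : ℝ) (v : (Fin d → ℤ) → ℝ) (E : ℝ) (s : ℕ) (κ : ℝ)
    (b : Fin d → ℤ) : Prop :=
  ∃ u : (Fin d → ℤ) → ℝ, (∀ w ∈ Λ, Nr b w (3 * s) → Sol Λ γ v E u w) ∧
    (∃ z ∈ Λ, Nr b z (2 * s) ∧ |u z| = 1) ∧
    (∀ w ∈ Λ, Nr b w (3 * s + 1) → |u w| ≤ 1) ∧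
    (∀ w ∈ Λ, Nr b w (3 * s + 1) → ¬ Nr b w (3 * s - 1) → |u w| ≤ κ)

lemma Wq.congr {Λ : Finset (Fin d → ℤ)} {γ : ℝ} {v v' : (Fin d → ℤ) → ℝ} {E : ℝ} {s : ℕ} {κ : ℝ}
    {b : Fin d → ℤ} (h : Wq Λ γ v E s κ b) (hv : ∀ w ∈ Λ, Nr b w (3 * s) → v w = v' w) :
    Wq Λ γ v' E s κ b := by
  obtain ⟨u, h1, h2⟩ := h
  exact ⟨u, fun w hw hn => (h1 w hw hn).congr (hv w hw hn), h2⟩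

/-- scalar iteration lemma -/
lemma iter_lemma {G : ℕ → ℝ} (hG : Monotone G) {δ : ℝ} (hδ : 0 ≤ δ) {s S r0 : ℕ}
    (h : ∀ r, r + 5 * s ≤ S → (r + 2 * s < r0 ∨ r0 + 5 * s ≤ r) → G r ≤ δ * G (r + s))
    (n : ℕ) (hn : n * s + 12 * s ≤ S) : G 0 ≤ δ ^ n * G S := by
  have A : ∀ n r, r0 + 5 * s ≤ r → r + n * s + 4 * s ≤ S → G r ≤ δ ^ n * G S := by
    intro n
    induction n with
    | zero => intro r _ hr; simpa using hG (by omega)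
    | succ n ih =>
      intro r h1 h2
      have h2' : r + n * s + s + 4 * s ≤ S := by rw [Nat.succ_mul] at h2; omega
      have h3 := h r (by have := Nat.zero_le (n * s); omega) (Or.inr h1)
      have h4 := ih (r + s) (by omega) (by omega)
      calc G r ≤ δ * G (r + s) := h3
        _ ≤ δ * (δ ^ n * G S) := mul_le_mul_of_nonneg_left h4 hδ
        _ = δ ^ (n + 1) * G S := by ring
  have B : ∀ n r, r + n * s + 12 * s ≤ S → G r ≤ δ ^ n * G S := by
    intro n
    induction n with
    | zero => intro r hr; simpa using hG (by omega)
    | succ n ih =>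
      intro r h2
      have h2' : r + n * s + s + 12 * s ≤ S := by rw [Nat.succ_mul] at h2; omega
      by_cases hr : r + 2 * s < r0
      · have h3 := h r (by have := Nat.zero_le (n * s); omega) (Or.inl hr)
        have h4 := ih (r + s) (by omega)
        calc G r ≤ δ * G (r + s) := h3
          _ ≤ δ * (δ ^ n * G S) := mul_le_mul_of_nonneg_left h4 hδ
          _ = δ ^ (n + 1) * G S := by ring
      · have h3 : G r ≤ G (max r (r0 + 5 * s)) := hG (le_max_left _ _)
        refine h3.trans (A (n + 1) _ (le_max_right _ _) ?_)
        rw [Nat.succ_mul]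
        omega
  exact B n 0 (by omega)

/-- The deterministic multiscale step. -/
lemma det_step {Λ : Finset (Fin d → ℤ)} {γ : ℝ} {v : (Fin d → ℤ) → ℝ} {E : ℝ} {s S n : ℕ} {κ : ℝ}
    {x : Fin d → ℤ} (hx : x ∈ Λ) (hs : 1 ≤ s) (hκ : 0 < κ) (hκ1 : κ < 1)
    (hn : n * s + 12 * s ≤ S)
    (h2 : ∀ w1 ∈ Λ, ∀ w2 ∈ Λ, Nr x w1 (S - s) → Nr x w2 (S - s) → ¬ Nr w1 w2 (2 * s) →
      Good Λ γ v E s (κ ^ 2) w1 ∨ Good Λ γ v E s (κ ^ 2) w2)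
    (hW : ∀ b ∈ Λ, Nr x b (S - 5 * s) → ¬ Wq Λ γ v E s κ b) :
    Good Λ γ v E S ((κ ^ n) ^ 2) x := by
  classical
  intro u M hu hM
  -- the max function
  have hne : ∀ r : ℕ, (Λ ∩ Bx x r).Nonempty := fun r =>
    ⟨x, Finset.mem_inter.2 ⟨hx, mem_Bx.2 (Nr.refl x (by positivity))⟩⟩
  set G : ℕ → ℝ := fun r => (Λ ∩ Bx x r).sup' (hne r) (fun w => |u w|) with hGdef
  have hGle : ∀ (r : ℕ) (w), w ∈ Λ → Nr x w r → |u w| ≤ G r := fun r w hw hn =>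
    Finset.le_sup' (fun w => |u w|) (Finset.mem_inter.2 ⟨hw, mem_Bx.2 hn⟩)
  have hGub : ∀ (r : ℕ) (c : ℝ), (∀ w ∈ Λ, Nr x w r → |u w| ≤ c) → G r ≤ c := by
    intro r c h
    apply Finset.sup'_le
    intro w hw
    rw [Finset.mem_inter, mem_Bx] at hw
    exact h w hw.1 hw.2
  have hGmono : Monotone G := fun r r' h =>
    hGub r _ fun w hw hn => hGle r' w hw (hn.mono (by exact_mod_cast h))
  have hG0 : ∀ r, 0 ≤ G r := fun r => (abs_nonneg _).trans (hGle r x hx (Nr.refl x (by positivity)))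
  have hgood : ∀ w ∈ Λ, ∀ r : ℕ, Nr x w r → r + s ≤ S → Good Λ γ v E s (κ ^ 2) w →
      |u w| ≤ κ ^ 2 * G (r + s) := by
    intro w hw r hn hr hg
    apply hg u
    · intro z hz hz2
      exact hu z hz (hn.trans hz2 (by omega))
    · intro z hz hz2
      exact hGle _ z hz (hn.trans hz2 (by push_cast; omega))
  have hfin : ∃ r0 : ℕ, ∀ r, r + 5 * s ≤ S → (r + 2 * s < r0 ∨ r0 + 5 * s ≤ r) →
      G r ≤ κ ^ 2 * G (r + s) := by
    by_cases hb : ∃ b ∈ Λ, Nr x b (S - 5 * s) ∧ ¬ Good Λ γ v E s (κ ^ 2) b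
    swap
    · push Not at hb
      refine ⟨0, fun r hr _ => hGub r _ fun w hw hn => ?_⟩
      exact hgood w hw r hn (by omega) (hb w hw (hn.mono (by omega)))
    obtain ⟨b, hbΛ, hbx, hbad⟩ := hb
    have hex : ∃ r : ℕ, Nr x b r := ⟨(S - 5 * s), by
      intro i
      have := hbx i
      have h0 := (abs_nonneg (b i - x i)).trans this
      push_cast [Nat.cast_sub] at this ⊢
      omega⟩
    classical
    set r0 := Nat.find hex with hr0
    have hr0s : Nr x b r0 := Nat.find_spec hex
    have hr0m : ∀ r < r0, ¬ Nr x b r := fun r hr => Nat.find_min hex hr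
    -- good sites away from b
    have hga : ∀ w ∈ Λ, Nr x w (S - s) → ¬ Nr b w (2 * s) → Good Λ γ v E s (κ ^ 2) w := by
      intro w hw hwx hwb
      exact (h2 b hbΛ w hw (hbx.mono (by omega)) hwx hwb).resolve_left hbad
    -- the bad region estimate
    have hbr : ∀ w ∈ Λ, Nr b w (2 * s) → ∀ A, (∀ z ∈ Λ, Nr b z (5 * s) → |u z| ≤ A) →
        |u w| ≤ κ * A := by
      intro w hw hwb A hA
      have hne' : (Λ ∩ Bx b (3 * s + 1)).Nonempty :=
        ⟨b, Finset.mem_inter.2 ⟨hbΛ, mem_Bx.2 (Nr.refl b (by positivity))⟩⟩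
      obtain ⟨z0, hz0, hz0max⟩ := Finset.exists_max_image _ (fun w => |u w|) hne'
      rw [Finset.mem_inter, mem_Bx] at hz0
      have hmax : ∀ z ∈ Λ, Nr b z (3 * s + 1) → |u z| ≤ |u z0| := fun z hz hz2 =>
        hz0max z (Finset.mem_inter.2 ⟨hz, mem_Bx.2 hz2⟩)
      by_contra hcon
      push Not at hcon
      have hA' : κ * A < |u z0| := hcon.trans_le (hmax w hw (hwb.mono (by omega)))
      have hA0 : 0 ≤ A := (abs_nonneg _).trans (hA b hbΛ (Nr.refl b (by positivity)))
      have hz0pos : 0 < |u z0| := lt_of_le_of_lt (by positivity) hA'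
      have hring : ∀ z ∈ Λ, Nr b z (3 * s + 1) → ¬ Nr b z (2 * s) → |u z| ≤ κ ^ 2 * A := by
        intro z hz hz1 hz2
        have hzx : Nr x z (S - s) := hbx.trans hz1 (by omega)
        apply hga z hz hzx hz2 u
        · intro y hy hyz
          exact hu y hy (hzx.trans hyz (by omega))
        · intro y hy hyz
          exact hA y hy (hz1.trans hyz (by omega))
      have hz0b : Nr b z0 (2 * s) := by
        by_contra hc
        have := hring z0 hz0.1 hz0.2 hc
        have : κ ^ 2 * A ≤ κ * A := by
          rw [pow_two]
          apply mul_le_mul_of_nonneg_right _ hA0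
          nlinarith
        linarith
      refine hW b hbΛ hbx ⟨fun z => |u z0|⁻¹ * u z, ?_, ⟨z0, hz0.1, hz0b, ?_⟩, ?_, ?_⟩
      · intro y hy hyb
        exact (hu y hy (hbx.trans hyb (by omega))).smul _
      · rw [abs_mul, abs_inv, abs_abs]
        exact inv_mul_cancel₀ hz0pos.ne'
      · intro y hy hyb
        rw [abs_mul, abs_inv, abs_abs, inv_mul_le_iff₀ hz0pos, mul_one]
        exact hmax y hy hyb
      · intro y hy hyb hyb2
        rw [abs_mul, abs_inv, abs_abs, inv_mul_le_iff₀ hz0pos]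
        have := hring y hy hyb (fun hc => hyb2 (hc.mono (by omega)))
        nlinarith
    refine ⟨r0, fun r hr hcase => ?_⟩
    rcases hcase with hc | hc
    · refine hGub r _ fun w hw hn => ?_
      refine hgood w hw r hn (by omega) (hga w hw (hn.mono (by omega)) fun hwb => ?_)
      refine hr0m (r + 2 * s) hc ?_
      exact hn.trans hwb.symm (by push_cast; omega)
    · have hm : G r ≤ max (κ ^ 2 * G (r + s)) (κ * G r) := by
        refine hGub r _ fun w hw hn => ?_
        by_cases hwb : Nr b w (2 * s)
        · refine le_max_of_le_right (hbr w hw hwb _ fun z hz hzb => ?_)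
          exact hGle r z hz (hr0s.trans hzb (by omega))
        · exact le_max_of_le_left (hgood w hw r hn (by omega) (hga w hw (hn.mono (by omega)) hwb))
      rcases le_max_iff.1 hm with h | h
      · exact h
      · have h0 : G r ≤ 0 := by nlinarith [hG0 r]
        exact h0.trans (mul_nonneg (by positivity) (hG0 _))
  obtain ⟨r0, hr0⟩ := hfin
  have hend := iter_lemma hGmono (by positivity) hr0 n hn
  have e1 : |u x| ≤ G 0 := hGle 0 x hx (Nr.refl x (by simp))
  have e2 : G S ≤ M := hGub S M hM
  calc |u x| ≤ G 0 := e1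
    _ ≤ (κ ^ 2) ^ n * G S := hend
    _ ≤ (κ ^ 2) ^ n * M := mul_le_mul_of_nonneg_left e2 (by positivity)
    _ = (κ ^ n) ^ 2 * M := by ring

end AL

namespace AL
variable {d : ℕ}

lemma dist1_eq_one_of_ne {w y : Fin d → ℤ} (h : dist1 w y = 1) {i0 : Fin d} (hne : w i0 ≠ y i0) :
    (w i0 - y i0).natAbs = 1 ∧ ∀ i, i ≠ i0 → w i = y i := by
  have e : (w i0 - y i0).natAbs + ∑ i ∈ Finset.univ.erase i0, (w i - y i).natAbs = 1 := by
    rw [← h]; exact Finset.add_sum_erase _ (fun i => (w i - y i).natAbs) (Finset.mem_univ i0)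
  have h1 : 1 ≤ (w i0 - y i0).natAbs := by omega
  refine ⟨by omega, fun i hi => ?_⟩
  have h2 : (w i - y i).natAbs ≤ ∑ i ∈ Finset.univ.erase i0, (w i - y i).natAbs :=
    Finset.single_le_sum (f := fun i => (w i - y i).natAbs) (fun _ _ => Nat.zero_le _)
      (Finset.mem_erase.2 ⟨hi, Finset.mem_univ i⟩)
  omega

/-- step in the direction `σ e_{i0}`. -/
def stp (σ : ℤ) (i0 : Fin d) (z : Fin d → ℤ) : Fin d → ℤ := Function.update z i0 (z i0 + σ)

lemma stp_self (σ : ℤ) (i0 : Fin d) (z : Fin d → ℤ) : stp σ i0 z i0 = z i0 + σ := by simp [stp]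

lemma stp_ne (σ : ℤ) {i0 i : Fin d} (z : Fin d → ℤ) (h : i ≠ i0) : stp σ i0 z i = z i := by
  simp [stp, h]

lemma stp_Nr {σ : ℤ} (hσ : σ = 1 ∨ σ = -1) (i0 : Fin d) (z : Fin d → ℤ) : Nr z (stp σ i0 z) 1 := by
  intro i
  by_cases h : i = i0
  · subst h; rw [stp_self, abs_le]; omega
  · rw [stp_ne σ z h]; simp

lemma dist1_stp {σ : ℤ} (hσ : σ = 1 ∨ σ = -1) (i0 : Fin d) (z : Fin d → ℤ) :
    dist1 (stp σ i0 z) z = 1 := by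
  unfold dist1
  rw [← Finset.add_sum_erase _ _ (Finset.mem_univ i0), Finset.sum_eq_zero, stp_self]
  · omega
  · intro i hi
    rw [stp_ne σ z (Finset.mem_erase.1 hi).1]; simp

lemma next_site {Λ : Finset (Fin d → ℤ)} {γ : ℝ} {v : (Fin d → ℤ) → ℝ} {E : ℝ}
    {u : (Fin d → ℤ) → ℝ} {z : Fin d → ℤ} {σ : ℤ} (hσ : σ = 1 ∨ σ = -1) (i0 : Fin d)
    (hγ : 0 < γ) (hγ1 : γ ≤ 1) (hz : z ∈ Λ) (hw : stp σ i0 z ∈ Λ)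
    (hsol : Sol Λ γ v E u (stp σ i0 z)) (hE : |2 * d * γ + v (stp σ i0 z) - E| ≤ 3) :
    ∃ y ∈ Λ, Nr (stp σ i0 z) y 1 ∧ σ * z i0 + 1 ≤ σ * y i0 ∧ γ / (3 ^ d + 3) * |u z| ≤ |u y| := by
  set w := stp σ i0 z with hwdef
  by_contra hcon
  push Not at hcon
  have hσw : σ * w i0 = σ * z i0 + 1 := by
    rw [hwdef, stp_self]
    rcases hσ with rfl | rfl <;> ring
  set c := γ / (3 ^ d + 3) * |u z| with hc
  have huw : |u w| < c := hcon w hw (Nr.refl w (by norm_num)) (by omega)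
  have hc0 : 0 ≤ c := by positivity
  have hznb : z ∈ nb Λ w := Finset.mem_filter.2 ⟨hz, dist1_stp hσ i0 z⟩
  have hoth : ∀ y ∈ (nb Λ w).erase z, |u y| ≤ c := by
    intro y hy
    rw [Finset.mem_erase] at hy
    refine (hcon y (nb_mem hy.2) (nb_Nr hy.2) ?_).le
    by_contra hlt
    push Not at hlt
    have hd := (Finset.mem_filter.1 hy.2).2
    have hne : w i0 ≠ y i0 := by
      intro h; rw [h] at hσw; omega
    obtain ⟨h1, h2⟩ := dist1_eq_one_of_ne hd hne
    apply hy.1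
    funext i
    by_cases hi : i = i0
    · subst hi
      rw [hwdef, stp_self] at h1 hne hσw
      rcases hσ with rfl | rfl <;> omega
    · rw [← h2 i hi, hwdef, stp_ne σ z hi]
  have hsum : ∑ y ∈ nb Λ w, u y = u z + ∑ y ∈ (nb Λ w).erase z, u y :=
    (Finset.add_sum_erase _ _ hznb).symm
  have hS : |∑ y ∈ (nb Λ w).erase z, u y| ≤ 3 ^ d * c := by
    calc |∑ y ∈ (nb Λ w).erase z, u y| ≤ ∑ y ∈ (nb Λ w).erase z, |u y| :=
        Finset.abs_sum_le_sum_abs _ _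
      _ ≤ ∑ y ∈ (nb Λ w).erase z, c := Finset.sum_le_sum hoth
      _ = ((nb Λ w).erase z).card * c := by simp
      _ ≤ 3 ^ d * c := by
        apply mul_le_mul_of_nonneg_right _ hc0
        exact_mod_cast (Finset.card_le_card (Finset.erase_subset _ _)).trans (card_nb Λ w)
  unfold Sol at hsol
  rw [hsum] at hsol
  have h1 : γ * u z = (2 * d * γ + v w - E) * u w - γ * ∑ y ∈ (nb Λ w).erase z, u y := by
    linarith
  have h2 : γ * |u z| ≤ 3 * |u w| + γ * (3 ^ d * c) := by
    calc γ * |u z| = |γ * u z| := by rw [abs_mul, abs_of_pos hγ]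
      _ = |(2 * d * γ + v w - E) * u w - γ * ∑ y ∈ (nb Λ w).erase z, u y| := by rw [h1]
      _ ≤ |(2 * d * γ + v w - E) * u w| + |γ * ∑ y ∈ (nb Λ w).erase z, u y| := abs_sub _ _
      _ = |2 * d * γ + v w - E| * |u w| + γ * |∑ y ∈ (nb Λ w).erase z, u y| := by
        rw [abs_mul, abs_mul, abs_of_pos hγ]
      _ ≤ _ := by gcongr
  have h3 : γ * (3 ^ d * c) ≤ 3 ^ d * c := by
    have : 0 ≤ 3 ^ d * c := by positivity
    nlinarith
  have h4 : (3 ^ d + 3) * c = γ * |u z| := by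
    rw [hc]; field_simp
  linarith

/-- selected sublists of paths -/
def paths (σ : ℤ) (i0 : Fin d) : ℕ → (Fin d → ℤ) → Finset (List (Fin d → ℤ))
  | 0, _ => {[]}
  | n + 1, z =>
    ((Bx (stp σ i0 z) 1).biUnion fun y => paths σ i0 n y) ∪
      ((Bx (stp σ i0 z) 1).biUnion fun y => paths σ i0 n y).image (List.cons z)

lemma card_paths (σ : ℤ) (i0 : Fin d) (n : ℕ) (z : Fin d → ℤ) :
    (paths σ i0 n z).card ≤ (2 * 3 ^ d) ^ n := by
  induction n generalizing z with
  | zero => simp [paths]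
  | succ n ih =>
    rw [paths]
    set X := (Bx (stp σ i0 z) 1).biUnion fun y => paths σ i0 n y with hX
    have h1 : X.card ≤ 3 ^ d * (2 * 3 ^ d) ^ n := by
      refine (Finset.card_biUnion_le_card_mul _ _ _ fun y _ => ih y).trans ?_
      have := card_Bx (stp σ i0 z) 1
      simp only [Nat.cast_one] at this
      rw [this]
    calc (X ∪ X.image (List.cons z)).card ≤ X.card + (X.image (List.cons z)).card :=
        Finset.card_union_le _ _
      _ ≤ X.card + X.card :=
        Nat.add_le_add_left (Finset.card_image_le (s := X) (f := List.cons z)) _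
      _ ≤ 3 ^ d * (2 * 3 ^ d) ^ n + 3 ^ d * (2 * 3 ^ d) ^ n := by gcongr
      _ = (2 * 3 ^ d) ^ (n + 1) := by ring

lemma nil_mem_paths (σ : ℤ) (i0 : Fin d) (n : ℕ) (z : Fin d → ℤ) : [] ∈ paths σ i0 n z := by
  induction n generalizing z with
  | zero => simp [paths]
  | succ n ih =>
    rw [paths]
    exact Finset.mem_union_left _ (Finset.mem_biUnion.2
      ⟨stp σ i0 z, mem_Bx.2 (Nr.refl _ (by norm_num)), ih _⟩)

/-- amplitude classes along a list -/
def Amp (η : ℝ) (u : (Fin d → ℤ) → ℝ) : ℕ → List (Fin d → ℤ) → Prop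
  | _, [] => True
  | i, z :: l => η ^ (2 * i + 1) ≤ |u z| ∧ |u z| ≤ η ^ (2 * i) ∧ Amp η u (i + 1) l

lemma path_lemma {Λ : Finset (Fin d → ℤ)} {γ : ℝ} {v : (Fin d → ℤ) → ℝ} {E : ℝ}
    {u : (Fin d → ℤ) → ℝ} {σ : ℤ} (hσ : σ = 1 ∨ σ = -1) (i0 : Fin d)
    (hγ : 0 < γ) (hγ1 : γ ≤ 1) {η : ℝ} (hη : η = γ / (3 ^ d + 3)) {b : Fin d → ℤ} {s : ℕ} {κ : ℝ}
    {c0 : ℤ}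
    (hE : ∀ w ∈ Λ, |2 * d * γ + v w - E| ≤ 3)
    (hu : ∀ w ∈ Λ, Nr b w (3 * s) → Sol Λ γ v E u w)
    (hκ : ∀ w ∈ Λ, Nr b w (3 * s + 1) → ¬ Nr b w (3 * s - 1) → |u w| ≤ κ)
    (room : ∀ z ∈ Λ, Nr b z (3 * s - 1) → c0 ≤ σ * z i0 → stp σ i0 z ∈ Λ) :
    ∀ (n i m : ℕ) (z : Fin d → ℤ), z ∈ Λ → Nr b z (3 * s + 1) → c0 ≤ σ * z i0 →
      3 * (s : ℤ) + 1 - n ≤ σ * (z i0 - b i0) → η ^ (2 * i + 1) ≤ |u z| →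
      κ < η ^ (2 * (i + m) + 1) →
      ∃ l ∈ paths σ i0 n z, l.length = m ∧ l.Nodup ∧ Amp η u i l ∧
        ∀ y ∈ l, y ∈ Λ ∧ Nr b y (3 * s) ∧ σ * z i0 ≤ σ * y i0 := by
  have hη0 : 0 < η := by rw [hη]; positivity
  have hη1 : η ≤ 1 := by
    rw [hη, div_le_one (by positivity)]
    have : (0:ℝ) ≤ 3 ^ d := by positivity
    linarith
  intro n
  induction n with
  | zero =>
    intro i m z hz hzb hzc hzn hzi hκm
    rcases m with _ | m
    · exact ⟨[], nil_mem_paths _ _ _ _, rfl, List.nodup_nil, trivial, by simp⟩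
    · exfalso
      have h1 : κ < |u z| := by
        refine hκm.trans_le (le_trans ?_ hzi)
        exact pow_le_pow_of_le_one hη0.le hη1 (by omega)
      have h2 : Nr b z (3 * s - 1) := by
        by_contra hc
        exact absurd (hκ z hz hzb hc) (not_le.2 h1)
      have := h2 i0
      rw [abs_le] at this
      rcases hσ with rfl | rfl <;> push_cast at hzn <;> omega
  | succ n ih =>
    intro i m z hz hzb hzc hzn hzi hκm
    rcases m with _ | m
    · exact ⟨[], nil_mem_paths _ _ _ _, rfl, List.nodup_nil, trivial, by simp⟩
    have h1 : κ < |u z| := by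
      refine hκm.trans_le (le_trans ?_ hzi)
      exact pow_le_pow_of_le_one hη0.le hη1 (by omega)
    have h2 : Nr b z (3 * s - 1) := by
      by_contra hc
      exact absurd (hκ z hz hzb hc) (not_le.2 h1)
    have hwΛ := room z hz h2 hzc
    have hwb : Nr b (stp σ i0 z) (3 * s) := h2.trans (stp_Nr hσ i0 z) (by omega)
    obtain ⟨y, hyΛ, hyw, hyσ, hyu⟩ := next_site hσ i0 hγ hγ1 hz hwΛ (hu _ hwΛ hwb) (hE _ hwΛ)
    rw [← hη] at hyu
    have hyb : Nr b y (3 * s + 1) := hwb.trans hyw (by omega)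
    have hyn : 3 * (s : ℤ) + 1 - n ≤ σ * (y i0 - b i0) := by
      push_cast at hzn
      rw [mul_sub] at hzn ⊢
      omega
    have hmemX : ∀ l ∈ paths σ i0 n y, l ∈ (Bx (stp σ i0 z) 1).biUnion fun y => paths σ i0 n y :=
      fun l hl => Finset.mem_biUnion.2 ⟨y, mem_Bx.2 hyw, hl⟩
    by_cases hsel : |u z| ≤ η ^ (2 * i)
    · obtain ⟨l, hl, hlen, hnd, hamp, hall⟩ := ih (i + 1) m y hyΛ hyb (by omega) hyn
        (by
          calc η ^ (2 * (i + 1) + 1) ≤ η ^ (2 * i + 1 + 1) :=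
                pow_le_pow_of_le_one hη0.le hη1 (by omega)
            _ = η * η ^ (2 * i + 1) := by ring
            _ ≤ η * |u z| := mul_le_mul_of_nonneg_left hzi hη0.le
            _ ≤ |u y| := hyu)
        (by
          have : 2 * (i + 1 + m) + 1 = 2 * (i + (m + 1)) + 1 := by ring
          rw [this]; exact hκm)
      refine ⟨z :: l, ?_, by simp [hlen], ?_, ⟨hzi, hsel, hamp⟩, ?_⟩
      · rw [paths]
        exact Finset.mem_union_right _ (Finset.mem_image_of_mem _ (hmemX l hl))
      · rw [List.nodup_cons]
        refine ⟨fun hzl => ?_, hnd⟩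
        have := (hall z hzl).2.2
        omega
      · intro y' hy'
        rcases List.mem_cons.1 hy' with rfl | hy'
        · exact ⟨hz, h2.mono (by omega), le_rfl⟩
        · obtain ⟨a1, a2, a3⟩ := hall y' hy'
          exact ⟨a1, a2, by omega⟩
    · push Not at hsel
      obtain ⟨l, hl, hlen, hnd, hamp, hall⟩ := ih i (m + 1) y hyΛ hyb (by omega) hyn
        (by
          calc η ^ (2 * i + 1) = η * η ^ (2 * i) := by ring
            _ ≤ η * |u z| := mul_le_mul_of_nonneg_left hsel.le hη0.le
            _ ≤ |u y| := hyu)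
        hκm
      refine ⟨l, ?_, hlen, hnd, hamp, ?_⟩
      · rw [paths]
        exact Finset.mem_union_left _ (hmemX l hl)
      · intro y' hy'
        obtain ⟨a1, a2, a3⟩ := hall y' hy'
        exact ⟨a1, a2, by omega⟩

lemma amp_sum {η : ℝ} (hη0 : 0 < η) {N : ℝ} (hN : 1 ≤ N) (hη : 4 * N * η ^ 2 ≤ 1)
    {u u' v v' : (Fin d → ℤ) → ℝ} (hv1 : ∀ w, |v w - v' w| ≤ 1)
    (hv : ∀ w, v w = v' w ∨ 1 / N ≤ |v w - v' w|) :
    ∀ (l : List (Fin d → ℤ)) (i : ℕ), Amp η u i l → Amp η u' i l →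
      |(l.map fun w => (v w - v' w) * (u w * u' w)).sum| ≤ 2 * η ^ (4 * i) ∧
      ((∀ w ∈ l, v w = v' w) ∨
        η ^ (4 * (i + l.length)) / (2 * N) ≤
          |(l.map fun w => (v w - v' w) * (u w * u' w)).sum|) := by
  have hη2 : η ^ 2 ≤ 1 / 4 := by nlinarith [sq_nonneg η]
  have hη1 : η ≤ 1 := by nlinarith
  intro l
  induction l with
  | nil => intro i _ _; simp; positivity
  | cons z l ih =>
    intro i h1 h2
    obtain ⟨a1, a2, a3⟩ := h1
    obtain ⟨b1, b2, b3⟩ := h2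
    obtain ⟨c1, c2⟩ := ih (i + 1) a3 b3
    rw [List.map_cons, List.sum_cons]
    set D := (l.map fun w => (v w - v' w) * (u w * u' w)).sum
    have e4 : η ^ (4 * (i + 1)) = η ^ (4 * i) * η ^ 2 * η ^ 2 := by ring
    have hp : 0 < η ^ (4 * i) := by positivity
    have hp2 : 0 < η ^ 2 := by positivity
    have hD : |D| ≤ 2 * (η ^ (4 * i) * η ^ 2 * η ^ 2) := by rw [← e4]; exact c1
    have hz : |(v z - v' z) * (u z * u' z)| = |v z - v' z| * (|u z| * |u' z|) := by
      rw [abs_mul, abs_mul]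
    have hup : |u z| * |u' z| ≤ η ^ (4 * i) := by
      calc |u z| * |u' z| ≤ η ^ (2 * i) * η ^ (2 * i) := by gcongr
        _ = η ^ (4 * i) := by ring
    have hlo : η ^ (4 * i) * η ^ 2 ≤ |u z| * |u' z| := by
      calc η ^ (4 * i) * η ^ 2 = η ^ (2 * i + 1) * η ^ (2 * i + 1) := by ring
        _ ≤ |u z| * |u' z| := by gcongr
    constructor
    · refine (abs_add_le _ _).trans ?_
      rw [hz]
      have : |v z - v' z| * (|u z| * |u' z|) ≤ 1 * η ^ (4 * i) := by
        gcongr; exact hv1 z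
      have : η ^ (4 * i) * η ^ 2 * η ^ 2 ≤ η ^ (4 * i) * (1/4) * (1/4) := by gcongr
      linarith
    · rcases hv z with hvz | hvz
      · have : (v z - v' z) * (u z * u' z) + D = D := by rw [hvz]; ring
        rw [this]
        rcases c2 with c2 | c2
        · left
          intro w hw
          rcases List.mem_cons.1 hw with rfl | hw
          · exact hvz
          · exact c2 w hw
        · right
          have e : i + (z :: l).length = i + 1 + l.length := by simp; omega
          rw [e]; exact c2
      · right
        have k1 : 1 / N * (η ^ (4 * i) * η ^ 2) ≤ |(v z - v' z) * (u z * u' z)| := by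
          rw [hz]; gcongr
        have k2 : |(v z - v' z) * (u z * u' z)| - |D| ≤ |(v z - v' z) * (u z * u' z) + D| := by
          have := abs_sub_abs_le_abs_sub ((v z - v' z) * (u z * u' z)) (-D)
          simpa using this
        have k3 : η ^ (4 * (i + (z :: l).length)) ≤ η ^ (4 * i) * η ^ 2 := by
          rw [← pow_add]
          exact pow_le_pow_of_le_one hη0.le hη1 (by simp; omega)
        have k4 : 2 * (η ^ (4 * i) * η ^ 2 * η ^ 2) ≤ (η ^ (4 * i) * η ^ 2) / (2 * N) := by
          rw [le_div_iff₀ (by positivity)]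
          have : 0 < η ^ (4 * i) * η ^ 2 := by positivity
          nlinarith
        have k5 : η ^ (4 * (i + (z :: l).length)) / (2 * N) ≤ (η ^ (4 * i) * η ^ 2) / (2 * N) := by
          gcongr
        have k6 : 1 / N * (η ^ (4 * i) * η ^ 2) = 2 * ((η ^ (4 * i) * η ^ 2) / (2 * N)) := by
          field_simp
        linarith

lemma green_antisymm (S : Finset (Fin d → ℤ)) (u u' : (Fin d → ℤ) → ℝ) :
    ∑ w ∈ S, ∑ y ∈ S with dist1 w y = 1, (u' w * u y - u w * u' y) = 0 := by
  have h1 : ∑ w ∈ S, ∑ y ∈ S with dist1 w y = 1, (u' w * u y - u w * u' y)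
      = ∑ w ∈ S, ∑ y ∈ S, if dist1 w y = 1 then (u' w * u y - u w * u' y) else 0 :=
    Finset.sum_congr rfl fun w _ => Finset.sum_filter _ _
  rw [h1]
  have h2 := Finset.sum_comm (s := S) (t := S)
    (f := fun w y => if dist1 w y = 1 then (u' w * u y - u w * u' y) else 0)
  have h3 : ∑ y ∈ S, ∑ w ∈ S, (if dist1 w y = 1 then (u' w * u y - u w * u' y) else 0)
      = - ∑ w ∈ S, ∑ y ∈ S, if dist1 w y = 1 then (u' w * u y - u w * u' y) else 0 := by
    rw [← Finset.sum_neg_distrib]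
    refine Finset.sum_congr rfl fun y _ => ?_
    rw [← Finset.sum_neg_distrib]
    refine Finset.sum_congr rfl fun w _ => ?_
    rw [dist1_comm y w]
    split_ifs <;> ring
  linarith

lemma green {Λ S : Finset (Fin d → ℤ)} (hS : S ⊆ Λ) {γ : ℝ} (hγ : 0 < γ)
    {v v' u u' : (Fin d → ℤ) → ℝ} {E E' κ : ℝ} (hκ0 : 0 ≤ κ)
    (h : ∀ w ∈ S, Sol Λ γ v E u w) (h' : ∀ w ∈ S, Sol Λ γ v' E' u' w)
    (hu : ∀ w ∈ S, |u w| ≤ 1) (hu' : ∀ w ∈ S, |u' w| ≤ 1)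
    (hκ : ∀ w ∈ S, ∀ y ∈ nb Λ w, y ∉ S → |u y| ≤ κ)
    (hκ' : ∀ w ∈ S, ∀ y ∈ nb Λ w, y ∉ S → |u' y| ≤ κ) :
    |∑ w ∈ S, (v w - v' w) * (u w * u' w)| ≤ (|E - E'| + 2 * κ * γ * 3 ^ d) * S.card := by
  have e1 : ∀ w ∈ S, (v w - v' w) * (u w * u' w) = (E - E') * (u w * u' w) +
      γ * (∑ y ∈ S with dist1 w y = 1, (u' w * u y - u w * u' y) +
        ∑ y ∈ (nb Λ w).filter (· ∉ S), (u' w * u y - u w * u' y)) := by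
    intro w hw
    have a1 := h w hw
    have a2 := h' w hw
    unfold Sol at a1 a2
    have hsplit : ∑ y ∈ S with dist1 w y = 1, (u' w * u y - u w * u' y) +
        ∑ y ∈ (nb Λ w).filter (· ∉ S), (u' w * u y - u w * u' y) =
        ∑ y ∈ nb Λ w, (u' w * u y - u w * u' y) := by
      rw [← Finset.sum_filter_add_sum_filter_not (nb Λ w) (· ∈ S)]
      congr 2
      ext y
      simp only [nb, Finset.mem_filter]
      constructor
      · rintro ⟨a, b⟩; exact ⟨⟨hS a, b⟩, a⟩
      · rintro ⟨⟨_, b⟩, a⟩; exact ⟨a, b⟩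
    rw [hsplit, Finset.sum_sub_distrib, ← Finset.mul_sum, ← Finset.mul_sum]
    linear_combination u' w * a1 - u w * a2
  have e2 : ∑ w ∈ S, (v w - v' w) * (u w * u' w) = ∑ w ∈ S, ((E - E') * (u w * u' w) +
        γ * ∑ y ∈ (nb Λ w).filter (· ∉ S), (u' w * u y - u w * u' y)) := by
    rw [Finset.sum_congr rfl e1]
    have hanti := green_antisymm S u u'
    have e3 : ∀ w ∈ S, (E - E') * (u w * u' w) +
      γ * (∑ y ∈ S with dist1 w y = 1, (u' w * u y - u w * u' y) +
        ∑ y ∈ (nb Λ w).filter (· ∉ S), (u' w * u y - u w * u' y)) =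
        γ * ∑ y ∈ S with dist1 w y = 1, (u' w * u y - u w * u' y) +
        ((E - E') * (u w * u' w) +
        γ * ∑ y ∈ (nb Λ w).filter (· ∉ S), (u' w * u y - u w * u' y)) := fun w _ => by ring
    rw [Finset.sum_congr rfl e3, Finset.sum_add_distrib, ← Finset.mul_sum, hanti, mul_zero,
      zero_add]
  rw [e2]
  calc |∑ w ∈ S, ((E - E') * (u w * u' w) +
        γ * ∑ y ∈ (nb Λ w).filter (· ∉ S), (u' w * u y - u w * u' y))|
      ≤ ∑ w ∈ S, |(E - E') * (u w * u' w) +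
        γ * ∑ y ∈ (nb Λ w).filter (· ∉ S), (u' w * u y - u w * u' y)| :=
        Finset.abs_sum_le_sum_abs _ _
    _ ≤ ∑ w ∈ S, (|E - E'| + 2 * κ * γ * 3 ^ d) := by
        refine Finset.sum_le_sum fun w hw => ?_
        refine (abs_add_le _ _).trans (add_le_add ?_ ?_)
        · rw [abs_mul, abs_mul]
          have : |u w| * |u' w| ≤ 1 * 1 := by
            have := hu w hw; have := hu' w hw
            gcongr
          have := abs_nonneg (E - E')
          nlinarith
        · rw [abs_mul, abs_of_pos hγ]
          have : |∑ y ∈ (nb Λ w).filter (· ∉ S), (u' w * u y - u w * u' y)| ≤ 3 ^ d * (2 * κ) := by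
            calc _ ≤ ∑ y ∈ (nb Λ w).filter (· ∉ S), |u' w * u y - u w * u' y| :=
                  Finset.abs_sum_le_sum_abs _ _
              _ ≤ ∑ y ∈ (nb Λ w).filter (· ∉ S), (2 * κ) := by
                  refine Finset.sum_le_sum fun y hy => ?_
                  rw [Finset.mem_filter] at hy
                  have b1 := hκ w hw y hy.1 hy.2
                  have b2 := hκ' w hw y hy.1 hy.2
                  have b3 := hu w hw
                  have b4 := hu' w hw
                  refine (abs_sub _ _).trans ?_
                  rw [abs_mul, abs_mul]
                  have c1 : |u' w| * |u y| ≤ 1 * κ := by gcongr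
                  have c2 : |u w| * |u' y| ≤ 1 * κ := by gcongr
                  linarith
              _ = ((nb Λ w).filter (· ∉ S)).card * (2 * κ) := by simp
              _ ≤ 3 ^ d * (2 * κ) := by
                  gcongr
                  exact_mod_cast (Finset.card_le_card (Finset.filter_subset _ _)).trans
                    (card_nb Λ w)
          nlinarith
    _ = _ := by rw [Finset.sum_const, nsmul_eq_mul]; ring

end AL

namespace AL
variable {d : ℕ}

section prob
variable {Ω : Type*} [Fintype Ω]

open scoped Classical in
lemma prob_eq_sum (A : Ω → Prop) :
    prob A = (∑ ω, if A ω then (1:ℝ) else 0) / Fintype.card Ω := by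
  unfold prob
  rw [Finset.sum_boole]

lemma prob_nonneg (A : Ω → Prop) : 0 ≤ prob A := by unfold prob; positivity

lemma prob_mono {A B : Ω → Prop} (h : ∀ ω, A ω → B ω) : prob A ≤ prob B := by
  classical
  unfold prob
  gcongr
  intro h'
  exact h _ h'

lemma prob_le_one (A : Ω → Prop) : prob A ≤ 1 := by
  classical
  unfold prob
  apply div_le_one_of_le₀ _ (by positivity)
  exact_mod_cast Finset.card_le_univ _

lemma prob_false : prob (fun _ : Ω => False) = 0 := by
  unfold prob; simp

lemma prob_or (A B : Ω → Prop) : prob (fun ω => A ω ∨ B ω) ≤ prob A + prob B := by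
  classical
  unfold prob
  rw [← add_div]
  gcongr
  have : (Finset.univ.filter fun ω => A ω ∨ B ω).card ≤
      (Finset.univ.filter A).card + (Finset.univ.filter B).card := by
    rw [Finset.filter_or]
    exact Finset.card_union_le _ _
  convert (Nat.cast_le (α := ℝ)).2 this using 1
  · congr!
  · push_cast; congr!

lemma prob_exists {ι : Type*} (I : Finset ι) (A : ι → Ω → Prop) :
    prob (fun ω => ∃ i ∈ I, A i ω) ≤ ∑ i ∈ I, prob (A i) := by
  classical
  induction I using Finset.induction_on with
  | empty => simp [prob]
  | insert a I ha ih =>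
    rw [Finset.sum_insert ha]
    refine (prob_mono (B := fun ω => A a ω ∨ ∃ i ∈ I, A i ω) ?_).trans
      ((prob_or _ _).trans (by gcongr))
    rintro ω ⟨i, hi, h⟩
    rcases Finset.mem_insert.1 hi with rfl | hi
    · exact Or.inl h
    · exact Or.inr ⟨i, hi, h⟩

lemma prob_exists_le {ι : Type*} (I : Finset ι) (A : ι → Ω → Prop) {n c : ℝ} (hc : 0 ≤ c)
    (hn : (I.card : ℝ) ≤ n) (h : ∀ i ∈ I, prob (A i) ≤ c) :
    prob (fun ω => ∃ i ∈ I, A i ω) ≤ n * c := by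
  refine (prob_exists I A).trans ((Finset.sum_le_sum h).trans ?_)
  rw [Finset.sum_const, nsmul_eq_mul]
  gcongr

end prob

section prod
set_option linter.unusedSectionVars false
variable {ι α : Type*} [Fintype ι] [Fintype α] [DecidableEq ι]

lemma prob_fiber [Nonempty α] (T : Finset ι) (A : (ι → α) → Prop)
    (h : ∀ ω ω', A ω → A ω' → (∀ i, i ∉ T → ω i = ω' i) → ω = ω') :
    prob A ≤ 1 / (Fintype.card α : ℝ) ^ T.card := by
  classical
  unfold prob
  have hα : (0:ℝ) < Fintype.card α := by exact_mod_cast Fintype.card_pos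
  have h1 : (Finset.univ.filter A).card ≤ Fintype.card ((↥(Tᶜ)) → α) := by
    rw [← Finset.card_univ]
    refine Finset.card_le_card_of_injOn (fun ω i => ω i) (fun _ _ => Finset.mem_univ _) ?_
    intro ω hω ω' hω' he
    refine h ω ω' (by simpa using hω) (by simpa using hω') fun i hi => ?_
    exact congrFun he ⟨i, Finset.mem_compl.2 hi⟩
  rw [Fintype.card_fun, Fintype.card_coe] at h1
  rw [Fintype.card_fun, div_le_div_iff₀ (by positivity) (by positivity), one_mul]
  calc ((Finset.univ.filter A).card : ℝ) * (Fintype.card α : ℝ) ^ T.card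
      ≤ ((Fintype.card α ^ (Tᶜ).card : ℕ) : ℝ) * (Fintype.card α : ℝ) ^ T.card := by
        gcongr
    _ = _ := by
        push_cast
        rw [← pow_add, Finset.card_compl_add_card]

open scoped Classical in
/-- mix two configurations -/
def mix (S : ι → Prop) (ω ω' : ι → α) : ι → α := fun i => if S i then ω i else ω' i

lemma mix_pos {S : ι → Prop} {ω ω' : ι → α} {i : ι} (h : S i) : mix S ω ω' i = ω i := by
  simp [mix, h]

lemma mix_neg {S : ι → Prop} {ω ω' : ι → α} {i : ι} (h : ¬ S i) : mix S ω ω' i = ω' i := by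
  simp [mix, h]

lemma sum_mix (S : ι → Prop) (f : (ι → α) → ℝ) :
    ∑ ω, ∑ ω', f (mix S ω ω') = Fintype.card (ι → α) * ∑ ω, f ω := by
  have h1 : ∑ ω, ∑ ω', f (mix S ω ω') =
      ∑ p : (ι → α) × (ι → α), f (mix S p.1 p.2) :=
    (Fintype.sum_prod_type (fun p : (ι → α) × (ι → α) => f (mix S p.1 p.2))).symm
  let e : ((ι → α) × (ι → α)) ≃ ((ι → α) × (ι → α)) :=
    { toFun := fun p => (mix S p.1 p.2, mix S p.2 p.1)
      invFun := fun p => (mix S p.1 p.2, mix S p.2 p.1)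
      left_inv := by
        rintro ⟨a, b⟩
        ext i <;> simp only [mix] <;> split_ifs <;> rfl
      right_inv := by
        rintro ⟨a, b⟩
        ext i <;> simp only [mix] <;> split_ifs <;> rfl }
  have h2 : ∑ p : (ι → α) × (ι → α), f (mix S p.1 p.2) =
      ∑ p : (ι → α) × (ι → α), f p.1 := Equiv.sum_comp e (fun p => f p.1)
  rw [h1, h2, Fintype.sum_prod_type]
  simp only [Finset.sum_const, Finset.card_univ, nsmul_eq_mul]
  rw [Finset.mul_sum]

/-- independence -/
lemma prob_indep [Nonempty α] (S : ι → Prop) (A B : (ι → α) → Prop)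
    (hA : ∀ ω ω', (∀ i, S i → ω i = ω' i) → A ω → A ω')
    (hB : ∀ ω ω', (∀ i, ¬ S i → ω i = ω' i) → B ω → B ω') :
    prob (fun ω => A ω ∧ B ω) = prob A * prob B := by
  classical
  have hc : (0:ℝ) < Fintype.card (ι → α) := by exact_mod_cast Fintype.card_pos
  have h := sum_mix S (fun ω : ι → α => if A ω ∧ B ω then (1:ℝ) else 0)
  have h2 : ∀ ω ω' : ι → α, (if A (mix S ω ω') ∧ B (mix S ω ω') then (1:ℝ) else 0) =
      (if A ω then 1 else 0) * (if B ω' then 1 else 0) := by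
    intro ω ω'
    have a : A (mix S ω ω') ↔ A ω :=
      ⟨hA _ _ fun i hi => mix_pos hi, hA _ _ fun i hi => (mix_pos hi).symm⟩
    have b : B (mix S ω ω') ↔ B ω' :=
      ⟨hB _ _ fun i hi => mix_neg hi, hB _ _ fun i hi => (mix_neg hi).symm⟩
    rw [a, b]
    by_cases h1 : A ω <;> by_cases h2 : B ω' <;> simp [h1, h2]
  simp only [h2, ← Finset.mul_sum, ← Finset.sum_mul] at h
  rw [prob_eq_sum, prob_eq_sum, prob_eq_sum]
  rw [div_mul_div_comm, h]
  field_simp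
  congr!

lemma prob_cond [Nonempty α] (S : ι → Prop) (A : (ι → α) → Prop) {c : ℝ}
    (h : ∀ ω, prob (fun ω' => A (mix S ω ω')) ≤ c) : prob A ≤ c := by
  classical
  have hc : (0:ℝ) < Fintype.card (ι → α) := by exact_mod_cast Fintype.card_pos
  have h1 := sum_mix S (fun ω : ι → α => if A ω then (1:ℝ) else 0)
  have h2 : ∑ ω : ι → α, ∑ ω', (if A (mix S ω ω') then (1:ℝ) else 0) ≤
      ∑ ω : ι → α, c * Fintype.card (ι → α) := by
    refine Finset.sum_le_sum fun ω _ => ?_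
    have := h ω
    rw [prob_eq_sum, div_le_iff₀ hc] at this
    exact this
  rw [h1, Finset.sum_const, nsmul_eq_mul, Finset.card_univ] at h2
  rw [prob_eq_sum, div_le_iff₀ hc]
  exact le_of_mul_le_mul_left h2 hc

end prod

section pot
variable {N : ℕ} {Λ : Finset (Fin d → ℤ)}

lemma pot_nonneg (hN : 2 ≤ N) (ω : Λ → Fin N) (w : Fin d → ℤ) : 0 ≤ potential N Λ ω w := by
  have : (2:ℝ) ≤ N := by exact_mod_cast hN
  unfold potential
  split_ifs
  · apply div_nonneg (by positivity); linarith
  · exact le_rfl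

lemma pot_le_one (hN : 2 ≤ N) (ω : Λ → Fin N) (w : Fin d → ℤ) : potential N Λ ω w ≤ 1 := by
  have : (2:ℝ) ≤ N := by exact_mod_cast hN
  unfold potential
  split_ifs with h
  · apply div_le_one_of_le₀ _ (by linarith)
    have h1 : ((ω ⟨w, h⟩ : ℕ)) + 1 ≤ N := (ω ⟨w, h⟩).2
    have : ((ω ⟨w, h⟩ : ℕ) : ℝ) + 1 ≤ N := by exact_mod_cast h1
    linarith
  · norm_num

lemma pot_diff (hN : 2 ≤ N) (ω ω' : Λ → Fin N) {w w' : Fin d → ℤ} (hw : w ∈ Λ) (hw' : w' ∈ Λ) :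
    ω ⟨w, hw⟩ = ω' ⟨w', hw'⟩ ∨ 1 / (N:ℝ) ≤ |potential N Λ ω w - potential N Λ ω' w'| := by
  have hN' : (2:ℝ) ≤ N := by exact_mod_cast hN
  by_cases h : ω ⟨w, hw⟩ = ω' ⟨w', hw'⟩
  · exact Or.inl h
  right
  simp only [potential, hw, hw', dif_pos]
  rw [← sub_div, abs_div, abs_of_pos (show (0:ℝ) < N - 1 by linarith)]
  have h1 : (1:ℝ) ≤ |((ω ⟨w, hw⟩ : ℕ) : ℝ) - ((ω' ⟨w', hw'⟩ : ℕ) : ℝ)| := by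
    have hne : ((ω ⟨w, hw⟩ : ℕ) : ℤ) - ((ω' ⟨w', hw'⟩ : ℕ) : ℤ) ≠ 0 := by
      intro h0
      apply h
      apply Fin.ext
      omega
    have := Int.one_le_abs hne
    exact_mod_cast this
  rw [div_le_div_iff₀ (by linarith) (by linarith)]
  nlinarith

lemma pot_congr {ω ω' : Λ → Fin N} {w : Fin d → ℤ} (h : ∀ hw : w ∈ Λ, ω ⟨w, hw⟩ = ω' ⟨w, hw⟩) :
    potential N Λ ω w = potential N Λ ω' w := by
  unfold potential
  split_ifs with hw
  · rw [h hw]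
  · rfl

end pot

end AL

namespace AL
variable {d : ℕ}

/-- sites of `Λ` in the ball -/
def LB (Λ : Finset (Fin d → ℤ)) (b : Fin d → ℤ) (r : ℕ) : Finset (Fin d → ℤ) := Bx b r ∩ Λ

lemma mem_LB {Λ : Finset (Fin d → ℤ)} {b w : Fin d → ℤ} {r : ℕ} :
    w ∈ LB Λ b r ↔ w ∈ Λ ∧ Nr b w r := by
  rw [LB, Finset.mem_inter, mem_Bx]; tauto

lemma card_LB (Λ : Finset (Fin d → ℤ)) (b : Fin d → ℤ) (r : ℕ) :
    (LB Λ b r).card ≤ (2 * r + 1) ^ d := by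
  rw [← card_Bx b r]; exact Finset.card_le_card Finset.inter_subset_left

/-- data of a wave along a list -/
def Wl (Λ : Finset (Fin d → ℤ)) (γ : ℝ) (v : (Fin d → ℤ) → ℝ) (E : ℝ) (s : ℕ) (κ η : ℝ)
    (b : Fin d → ℤ) (l : List (Fin d → ℤ)) : Prop :=
  ∃ u : (Fin d → ℤ) → ℝ, (∀ w ∈ Λ, Nr b w (3 * s) → Sol Λ γ v E u w) ∧
    (∀ w ∈ Λ, Nr b w (3 * s + 1) → |u w| ≤ 1) ∧
    (∀ w ∈ Λ, Nr b w (3 * s + 1) → ¬ Nr b w (3 * s - 1) → |u w| ≤ κ) ∧ Amp η u 0 l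

lemma wegner_list {N : ℕ} (hN : 2 ≤ N) {γ : ℝ} (hγ : 0 < γ) {Λ : Finset (Fin d → ℤ)}
    {s m : ℕ} {κ η ε E0 : ℝ} (hη0 : 0 < η) (hη : 4 * N * η ^ 2 ≤ 1) (hκ0 : 0 ≤ κ)
    (hκε : (2 * ε + 2 * κ * γ * 3 ^ d) * (6 * s + 1) ^ d < η ^ (4 * m) / (2 * N))
    (b : Fin d → ℤ) (l : List (Fin d → ℤ)) (hl : l.Nodup) (hlm : l.length = m)
    (hlΛ : ∀ y ∈ l, y ∈ Λ ∧ Nr b y (3 * s)) (hε : 0 ≤ ε) :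
    prob (fun ω : Λ → Fin N => ∃ E, |E - E0| ≤ ε ∧ Wl Λ γ (potential N Λ ω) E s κ η b l)
      ≤ 1 / (N : ℝ) ^ m := by
  classical
  have hNp : 0 < N := by omega
  have : Nonempty (Fin N) := ⟨⟨0, hNp⟩⟩
  have hNr : (1:ℝ) ≤ N := by exact_mod_cast hNp
  set T : Finset Λ := l.toFinset.subtype (· ∈ Λ) with hT
  have hTc : T.card = m := by
    rw [hT, Finset.card_subtype, Finset.filter_true_of_mem, List.toFinset_card_of_nodup hl, hlm]
    intro y hy
    exact (hlΛ y (List.mem_toFinset.1 hy)).1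
  have hfib := prob_fiber T
    (fun ω : Λ → Fin N => ∃ E, |E - E0| ≤ ε ∧ Wl Λ γ (potential N Λ ω) E s κ η b l) ?_
  · rw [hTc, Fintype.card_fin] at hfib; exact hfib
  rintro ω ω' ⟨E, hE, u, h1, h2, h3, h4⟩ ⟨E', hE', u', h1', h2', h3', h4'⟩ hag
  set v := potential N Λ ω with hv
  set v' := potential N Λ ω' with hv'
  set S := LB Λ b (3 * s) with hS
  have hSΛ : S ⊆ Λ := fun w hw => (mem_LB.1 hw).1
  have hSN : ∀ w ∈ S, Nr b w (3 * s) := fun w hw => by simpa using (mem_LB.1 hw).2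
  have hring : ∀ w ∈ S, ∀ y ∈ nb Λ w, y ∉ S → y ∈ Λ ∧ Nr b y (3 * s + 1) ∧ ¬ Nr b y (3 * s - 1) := by
    intro w hw y hy hyS
    refine ⟨nb_mem hy, (hSN w hw).trans (nb_Nr hy) le_rfl, fun h => hyS ?_⟩
    exact mem_LB.2 ⟨nb_mem hy, h.mono (by push_cast; omega)⟩
  have hvd : ∀ w, v w = v' w ∨ 1 / (N:ℝ) ≤ |v w - v' w| := by
    intro w
    by_cases hw : w ∈ Λ
    · rcases pot_diff hN ω ω' hw hw with h | h
      · exact Or.inl (pot_congr fun _ => h)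
      · exact Or.inr h
    · left; simp [hv, hv', potential, hw]
  have hv1 : ∀ w, |v w - v' w| ≤ 1 := by
    intro w
    have := pot_nonneg hN ω w; have := pot_nonneg hN ω' w
    have := pot_le_one hN ω w; have := pot_le_one hN ω' w
    rw [abs_le]; constructor <;> linarith
  have hoff : ∀ w, w ∉ l → v w = v' w := by
    intro w hw
    refine pot_congr fun hwΛ => hag _ ?_
    simp [hT, hw]
  have hgreen := green hSΛ hγ hκ0 (fun w hw => h1 w (hSΛ hw) (hSN w hw))
    (fun w hw => h1' w (hSΛ hw) (hSN w hw))
    (fun w hw => h2 w (hSΛ hw) ((hSN w hw).mono (by omega)))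
    (fun w hw => h2' w (hSΛ hw) ((hSN w hw).mono (by omega)))
    (fun w hw y hy hyS => let q := hring w hw y hy hyS; h3 y q.1 q.2.1 q.2.2)
    (fun w hw y hy hyS => let q := hring w hw y hy hyS; h3' y q.1 q.2.1 q.2.2)
  have hsum : ∑ w ∈ S, (v w - v' w) * (u w * u' w) =
      (l.map fun w => (v w - v' w) * (u w * u' w)).sum := by
    rw [← List.sum_toFinset _ hl]
    symm
    apply Finset.sum_subset
    · intro y hy
      have := hlΛ y (List.mem_toFinset.1 hy)
      exact mem_LB.2 ⟨this.1, by simpa using this.2⟩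
    · intro w _ hw
      rw [hoff w (fun h => hw (List.mem_toFinset.2 h))]; ring
  rw [hsum] at hgreen
  have hEE : |E - E'| ≤ 2 * ε := by
    rw [abs_le] at *; constructor <;> linarith
  have hcard : (S.card : ℝ) ≤ (6 * s + 1) ^ d := by
    have := card_LB Λ b (3 * s)
    have e : 2 * (3 * s) + 1 = 6 * s + 1 := by ring
    rw [e] at this
    exact_mod_cast this
  have hlt : |(l.map fun w => (v w - v' w) * (u w * u' w)).sum| < η ^ (4 * m) / (2 * N) := by
    refine lt_of_le_of_lt (hgreen.trans ?_) hκε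
    gcongr
  have hall : ∀ w ∈ l, v w = v' w := by
    rcases (amp_sum hη0 hNr hη hv1 hvd l 0 h4 h4').2 with h | h
    · exact h
    · rw [zero_add, hlm] at h
      exact absurd h (not_le.2 hlt)
  funext ⟨w, hw⟩
  have hvw : v w = v' w := by
    by_cases h : w ∈ l
    · exact hall w h
    · exact hoff w h
  rcases pot_diff hN ω ω' hw hw with h | h
  · exact h
  · exfalso
    rw [← hv, ← hv', hvw, sub_self, abs_zero] at h
    have : (0:ℝ) < 1 / N := by positivity
    linarith

lemma wegner {N : ℕ} (hN : 2 ≤ N) {γ : ℝ} (hγ : 0 < γ) (hγ3 : γ * 3 ^ d ≤ 1 / 2)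
    {Λ : Finset (Fin d → ℤ)} {a c : Fin d → ℤ} (hΛ : Λ = Finset.Icc a c) (i0 : Fin d)
    {s m : ℕ} (hs : 1 ≤ s) (hside : a i0 + 20 * s ≤ c i0)
    {κ η ε E0 : ℝ} (hηγ : η = γ / (3 ^ d + 3)) (hη : 4 * N * η ^ 2 ≤ 1) (hκ0 : 0 ≤ κ)
    (hκm : κ < η ^ (2 * m + 1))
    (hκε : (2 * ε + 2 * κ * γ * 3 ^ d) * (6 * s + 1) ^ d < η ^ (4 * m) / (2 * N))
    (b : Fin d → ℤ) (hε : 0 ≤ ε) :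
    prob (fun ω : Λ → Fin N => ∃ E, |E - E0| ≤ ε ∧ Wq Λ γ (potential N Λ ω) E s κ b)
      ≤ 2 * (4 * s + 1) ^ d * (2 * 3 ^ d) ^ (5 * s + 1) * (1 / (N : ℝ) ^ m) := by
  classical
  have h3d : (1:ℝ) ≤ 3 ^ d := one_le_pow₀ (by norm_num)
  have hγ1 : γ ≤ 1 := by nlinarith
  have hη0 : 0 < η := by rw [hηγ]; positivity
  have hη1 : η ≤ 1 := by
    rw [hηγ, div_le_one (by positivity)]
    linarith
  -- index set
  set I : Finset (List (Fin d → ℤ)) := (LB Λ b (2 * s)).biUnion fun z =>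
    paths 1 i0 (5 * s + 1) z ∪ paths (-1) i0 (5 * s + 1) z with hI
  have hIc : (I.card : ℝ) ≤ 2 * (4 * s + 1) ^ d * (2 * 3 ^ d) ^ (5 * s + 1) := by
    have h1 : I.card ≤ (LB Λ b (2 * s)).card * (2 * (2 * 3 ^ d) ^ (5 * s + 1)) := by
      refine Finset.card_biUnion_le_card_mul _ _ _ fun z _ => ?_
      refine (Finset.card_union_le _ _).trans ?_
      have := card_paths 1 i0 (5 * s + 1) z
      have := card_paths (-1) i0 (5 * s + 1) z
      omega
    have h2 := card_LB Λ b (2 * s)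
    have e : 2 * (2 * s) + 1 = 4 * s + 1 := by ring
    rw [e] at h2
    have h3 : I.card ≤ (4 * s + 1) ^ d * (2 * (2 * 3 ^ d) ^ (5 * s + 1)) :=
      h1.trans (Nat.mul_le_mul_right _ h2)
    calc (I.card : ℝ) ≤ (((4 * s + 1) ^ d * (2 * (2 * 3 ^ d) ^ (5 * s + 1)) : ℕ) : ℝ) := by
          exact_mod_cast h3
      _ = _ := by push_cast; ring
  have key : ∀ ω : Λ → Fin N, (∃ E, |E - E0| ≤ ε ∧ Wq Λ γ (potential N Λ ω) E s κ b) →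
      ∃ l ∈ I, (l.Nodup ∧ l.length = m ∧ (∀ y ∈ l, y ∈ Λ ∧ Nr b y (3 * s))) ∧
        ∃ E, |E - E0| ≤ ε ∧ Wl Λ γ (potential N Λ ω) E s κ η b l := by
    rintro ω ⟨E, hE, u, h1, ⟨z0, hz0, hz0b, hz0u⟩, h2, h3⟩
    set v := potential N Λ ω with hv
    have hEz : |2 * d * γ + v z0 - E| ≤ 1 / 2 := by
      have hsol := h1 z0 hz0 (hz0b.mono (by omega))
      unfold Sol at hsol
      have e := congrArg abs hsol
      rw [abs_mul, abs_mul, hz0u, mul_one, abs_of_pos hγ] at e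
      rw [e]
      have := sol_sum_le (Λ := Λ) (u := u) (w := z0) (M := 1) zero_le_one
        (fun y hy => h2 y (nb_mem hy) (hz0b.trans (nb_Nr hy) (by omega)))
      nlinarith
    have hE3 : ∀ w ∈ Λ, |2 * d * γ + v w - E| ≤ 3 := by
      intro w _
      have := pot_nonneg hN ω w; have := pot_nonneg hN ω z0
      have := pot_le_one hN ω w; have := pot_le_one hN ω z0
      rw [abs_le] at *; constructor <;> linarith
    have main : ∀ σ : ℤ, (σ = 1 ∨ σ = -1) →
        (∀ z ∈ Λ, Nr b z (3 * s - 1) → σ * z0 i0 ≤ σ * z i0 → stp σ i0 z ∈ Λ) →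
        ∃ l ∈ paths σ i0 (5 * s + 1) z0, l.length = m ∧ l.Nodup ∧ Amp η u 0 l ∧
          ∀ y ∈ l, y ∈ Λ ∧ Nr b y (3 * s) ∧ σ * z0 i0 ≤ σ * y i0 := by
      intro σ hσ room
      refine path_lemma hσ i0 hγ hγ1 hηγ hE3 h1 h3 room (5 * s + 1) 0 m z0 hz0
        (hz0b.mono (by omega)) le_rfl ?_ ?_ ?_
      · have := hz0b i0
        rw [abs_le] at this
        push_cast
        rcases hσ with rfl | rfl <;> omega
      · rw [hz0u]; simpa using hη1
      · simpa using hκm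
    have hz0I : z0 ∈ LB Λ b (2 * s) := mem_LB.2 ⟨hz0, by simpa using hz0b⟩
    by_cases hroom : z0 i0 + 6 * s ≤ c i0
    · obtain ⟨l, hl, hlen, hnd, hamp, hall⟩ := main 1 (Or.inl rfl) (by
        intro z hz hzb hzc
        rw [hΛ, Finset.mem_Icc, Pi.le_def, Pi.le_def] at hz ⊢
        have q1 := hzb i0
        have q2 := hz0b i0
        rw [abs_le] at q1 q2
        constructor
        · intro i
          by_cases h : i = i0
          · subst h; rw [stp_self]; have := hz.1 i; omega
          · rw [stp_ne 1 z h]; exact hz.1 i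
        · intro i
          by_cases h : i = i0
          · subst h; rw [stp_self]; omega
          · rw [stp_ne 1 z h]; exact hz.2 i)
      exact ⟨l, Finset.mem_biUnion.2 ⟨z0, hz0I, Finset.mem_union_left _ hl⟩,
        ⟨hnd, hlen, fun y hy => ⟨(hall y hy).1, (hall y hy).2.1⟩⟩, E, hE, u, h1, h2, h3, hamp⟩
    · obtain ⟨l, hl, hlen, hnd, hamp, hall⟩ := main (-1) (Or.inr rfl) (by
        intro z hz hzb hzc
        rw [hΛ, Finset.mem_Icc, Pi.le_def, Pi.le_def] at hz ⊢
        have q1 := hzb i0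
        have q2 := hz0b i0
        rw [abs_le] at q1 q2
        constructor
        · intro i
          by_cases h : i = i0
          · subst h; rw [stp_self]; omega
          · rw [stp_ne (-1) z h]; exact hz.1 i
        · intro i
          by_cases h : i = i0
          · subst h; rw [stp_self]; have := hz.2 i; omega
          · rw [stp_ne (-1) z h]; exact hz.2 i)
      exact ⟨l, Finset.mem_biUnion.2 ⟨z0, hz0I, Finset.mem_union_right _ hl⟩,
        ⟨hnd, hlen, fun y hy => ⟨(hall y hy).1, (hall y hy).2.1⟩⟩, E, hE, u, h1, h2, h3, hamp⟩
  refine (prob_mono key).trans (prob_exists_le I _ (by positivity) hIc fun l _ => ?_)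
  by_cases hl : l.Nodup ∧ l.length = m ∧ (∀ y ∈ l, y ∈ Λ ∧ Nr b y (3 * s))
  · obtain ⟨a1, a2, a3⟩ := hl
    exact (prob_mono fun ω h => h.2).trans (wegner_list hN hγ hη0 hη hκ0 hκε b l a1 a2 a3 hε)
  · refine (prob_mono (B := fun _ => False) fun ω h => hl h.1).trans ?_
    rw [prob_false]; positivity

end AL

namespace AL
variable {d : ℕ}

lemma hamOn_mulVec (γ : ℝ) (v : (Fin d → ℤ) → ℝ) (X : Finset (Fin d → ℤ))
    (u : (Fin d → ℤ) → ℝ) (w : X) :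
    (hamOn d γ v X).mulVec (fun y => u y) w =
      (2 * d * γ + v w) * u w - γ * ∑ y ∈ nb X w, u y := by
  have h1 : (hamOn d γ v X).mulVec (fun y => u y) w =
      ∑ y : X, (hamEntry d γ v w y) * u y := rfl
  rw [h1, Finset.sum_coe_sort X (fun y => hamEntry d γ v w y * u y)]
  simp only [hamEntry, sub_mul, Finset.sum_sub_distrib]
  congr 1
  · simp [ite_mul]
  · rw [nb, Finset.sum_filter, Finset.mul_sum]
    refine Finset.sum_congr rfl fun y _ => ?_
    split_ifs <;> ring

/-- the spectrum as a finset -/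
def specOn (d : ℕ) (γ : ℝ) (v : (Fin d → ℤ) → ℝ) (S : Finset (Fin d → ℤ)) : Finset ℝ :=
  Finset.univ.image (hamOn_isHermitian d γ v S).eigenvalues

lemma card_specOn (γ : ℝ) (v : (Fin d → ℤ) → ℝ) (S : Finset (Fin d → ℤ)) :
    (specOn d γ v S).card ≤ S.card := by
  refine Finset.card_image_le.trans ?_
  simp

lemma specOn_congr {γ : ℝ} {v v' : (Fin d → ℤ) → ℝ} {S : Finset (Fin d → ℤ)}
    (h : ∀ w ∈ S, v w = v' w) : specOn d γ v S = specOn d γ v' S := by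
  have e : hamOn d γ v S = hamOn d γ v' S := by
    ext x y
    simp only [hamOn, Matrix.of_apply, hamEntry, h x x.2]
  have key : ∀ (M M' : Matrix S S ℝ) (hM : M.IsHermitian) (hM' : M'.IsHermitian), M = M' →
      Finset.univ.image hM.eigenvalues = Finset.univ.image hM'.eigenvalues := by
    rintro M _ hM hM' rfl; rfl
  exact key _ _ _ _ e

lemma pin_matrix {n : Type*} [Fintype n] [DecidableEq n] {M : Matrix n n ℝ} (hM : M.IsHermitian)
    {E r : ℝ} (hr : 0 ≤ r) (u : n → ℝ) (z : n) (hz : |u z| = 1)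
    (h : ∀ w, |M.mulVec u w - E * u w| ≤ r) :
    ∃ i, |hM.eigenvalues i - E| ≤ r * Fintype.card n := by
  by_contra hcon
  push Not at hcon
  set f := hM.eigenvectorBasis with hf
  set U : EuclideanSpace ℝ n := WithLp.toLp 2 u with hU
  set W : EuclideanSpace ℝ n := WithLp.toLp 2 (fun w => M.mulVec u w - E * u w) with hW
  have hfi : ∀ i, M.mulVec (f i) = hM.eigenvalues i • ⇑(f i) := hM.mulVec_eigenvectorBasis
  have hinner : ∀ i, inner ℝ (f i) W = (hM.eigenvalues i - E) * inner ℝ (f i) U := by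
    intro i
    have e0 : ∀ X : EuclideanSpace ℝ n, inner ℝ (f i) X = (fun w => X w) ⬝ᵥ (fun w => f i w) := by
      intro X
      simp [PiLp.inner_apply, dotProduct]
    rw [e0, e0]
    have e1 : (fun w => W w) = M.mulVec u - E • u := by
      funext w; simp [hW]
    have e2 : (fun w => U w) = u := rfl
    rw [e1, e2, sub_dotProduct, smul_dotProduct]
    have e3 : M.mulVec u ⬝ᵥ (fun w => f i w) = hM.eigenvalues i * (u ⬝ᵥ (fun w => f i w)) := by
      have hMt : M.transpose = M := by
        have := hM.eq
        rwa [Matrix.conjTranspose_eq_transpose_of_trivial] at this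
      rw [dotProduct_comm, Matrix.dotProduct_mulVec, ← Matrix.mulVec_transpose, hMt]
      have e4 := hfi i
      rw [show (fun w => f i w) = (⇑(f i) : n → ℝ) from rfl, e4, smul_dotProduct, dotProduct_comm]
      rfl
    rw [e3, smul_eq_mul]; ring
  have hWn : ∑ i, (inner ℝ (f i) W) ^ 2 = ∑ w, (W w) ^ 2 := by
    have := f.sum_sq_norm_inner_right W
    rw [EuclideanSpace.norm_sq_eq] at this
    simpa using this
  have hUn : ∑ i, (inner ℝ (f i) U) ^ 2 = ∑ w, (U w) ^ 2 := by
    have := f.sum_sq_norm_inner_right U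
    rw [EuclideanSpace.norm_sq_eq] at this
    simpa using this
  have hcard : (1:ℝ) ≤ Fintype.card n := by
    have : 0 < Fintype.card n := Fintype.card_pos_iff.2 ⟨z⟩
    exact_mod_cast this
  have hU1 : 1 ≤ ∑ w, (U w) ^ 2 := by
    have : (U z) ^ 2 = 1 := by
      have : U z = u z := rfl
      rw [this, ← sq_abs, hz]; norm_num
    rw [← this]
    exact Finset.single_le_sum (f := fun w => (U w) ^ 2) (fun _ _ => sq_nonneg _) (Finset.mem_univ z)
  have hW1 : ∑ w, (W w) ^ 2 ≤ Fintype.card n * r ^ 2 := by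
    have : ∀ w ∈ Finset.univ, (W w) ^ 2 ≤ r ^ 2 := by
      intro w _
      have := h w
      rw [← sq_abs]
      have e : W w = M.mulVec u w - E * u w := rfl
      rw [e]
      gcongr
    refine (Finset.sum_le_sum this).trans ?_
    simp
  have hlow : (r * Fintype.card n) ^ 2 * ∑ i, (inner ℝ (f i) U) ^ 2 <
      ∑ i, (inner ℝ (f i) W) ^ 2 := by
    rw [Finset.mul_sum]
    have hpt : ∀ i, (r * Fintype.card n) ^ 2 * (inner ℝ (f i) U) ^ 2 ≤ (inner ℝ (f i) W) ^ 2 := by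
      intro i
      rw [hinner i, mul_pow (hM.eigenvalues i - E), ← sq_abs (hM.eigenvalues i - E)]
      have := (hcon i).le
      gcongr
    have hex : ∃ i, inner ℝ (f i) U ≠ 0 := by
      by_contra hc
      push Not at hc
      have : ∑ i, (inner ℝ (f i) U) ^ 2 = 0 := Finset.sum_eq_zero fun i _ => by rw [hc i]; norm_num
      linarith
    obtain ⟨i, hi⟩ := hex
    refine Finset.sum_lt_sum (fun i _ => hpt i) ⟨i, Finset.mem_univ i, ?_⟩
    rw [hinner i, mul_pow (hM.eigenvalues i - E), ← sq_abs (hM.eigenvalues i - E)]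
    have := hcon i
    have : 0 < (inner ℝ (f i) U) ^ 2 := by positivity
    gcongr
  rw [hWn, hUn] at hlow
  have h1 : (r * Fintype.card n) ^ 2 ≤ (r * Fintype.card n) ^ 2 * ∑ w, (U w) ^ 2 :=
    le_mul_of_one_le_right (by positivity) hU1
  have h2 : (Fintype.card n : ℝ) * r ^ 2 ≤ (r * Fintype.card n) ^ 2 := by
    have : 0 ≤ r ^ 2 := by positivity
    nlinarith [mul_nonneg this (show (0:ℝ) ≤ Fintype.card n by positivity)]
  linarith

lemma pin {Λ : Finset (Fin d → ℤ)} {γ : ℝ} (hγ : 0 < γ) {v : (Fin d → ℤ) → ℝ} {E : ℝ} {s : ℕ}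
    {κ : ℝ} (hκ : 0 ≤ κ) {b : Fin d → ℤ} (h : Wq Λ γ v E s κ b) :
    ∃ lam ∈ specOn d γ v (LB Λ b (3 * s)), |E - lam| ≤ γ * 3 ^ d * κ * (6 * s + 1) ^ d := by
  obtain ⟨u, h1, ⟨z, hz, hzb, hzu⟩, h2, h3⟩ := h
  set S := LB Λ b (3 * s) with hS
  have hSΛ : S ⊆ Λ := fun w hw => (mem_LB.1 hw).1
  have hSN : ∀ w ∈ S, Nr b w (3 * s) := fun w hw => by simpa using (mem_LB.1 hw).2
  have hzS : z ∈ S := mem_LB.2 ⟨hz, hzb.mono (by push_cast; omega)⟩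
  have hring : ∀ w ∈ S, ∀ y ∈ nb Λ w, y ∉ S → |u y| ≤ κ := by
    intro w hw y hy hyS
    refine h3 y (nb_mem hy) ((hSN w hw).trans (nb_Nr hy) le_rfl) fun h => hyS ?_
    exact mem_LB.2 ⟨nb_mem hy, h.mono (by push_cast; omega)⟩
  obtain ⟨i, hi⟩ := pin_matrix (hamOn_isHermitian d γ v S) (E := E) (r := γ * 3 ^ d * κ)
    (by positivity) (fun y => u y) ⟨z, hzS⟩ hzu (by
      rintro ⟨w, hw⟩
      have hsol := h1 w (hSΛ hw) (hSN w hw)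
      unfold Sol at hsol
      rw [hamOn_mulVec]
      have hsplit : ∑ y ∈ nb S w, u y + ∑ y ∈ (nb Λ w).filter (· ∉ S), u y = ∑ y ∈ nb Λ w, u y := by
        rw [← Finset.sum_filter_add_sum_filter_not (nb Λ w) (· ∈ S)]
        congr 2
        ext y
        simp only [nb, Finset.mem_filter]
        constructor
        · rintro ⟨a, b⟩; exact ⟨⟨hSΛ a, b⟩, a⟩
        · rintro ⟨⟨_, b⟩, a⟩; exact ⟨a, b⟩
      have e : (2 * d * γ + v w) * u w - γ * ∑ y ∈ nb S w, u y - E * u w =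
          γ * ∑ y ∈ (nb Λ w).filter (· ∉ S), u y := by
        rw [← hsplit] at hsol
        linear_combination hsol
      show |(2 * d * γ + v w) * u w - γ * ∑ y ∈ nb S w, u y - E * u w| ≤ _
      rw [e, abs_mul, abs_of_pos hγ, mul_assoc]
      gcongr
      calc |∑ y ∈ (nb Λ w).filter (· ∉ S), u y| ≤ ∑ y ∈ (nb Λ w).filter (· ∉ S), |u y| :=
            Finset.abs_sum_le_sum_abs _ _
        _ ≤ ∑ y ∈ (nb Λ w).filter (· ∉ S), κ := by
            refine Finset.sum_le_sum fun y hy => ?_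
            rw [Finset.mem_filter] at hy
            exact hring w hw y hy.1 hy.2
        _ = ((nb Λ w).filter (· ∉ S)).card * κ := by simp
        _ ≤ 3 ^ d * κ := by
            gcongr
            exact_mod_cast (Finset.card_le_card (Finset.filter_subset _ _)).trans (card_nb Λ w))
  refine ⟨_, Finset.mem_image_of_mem _ (Finset.mem_univ i), ?_⟩
  rw [abs_sub_comm]
  refine hi.trans ?_
  gcongr
  rw [Fintype.card_coe]
  have := card_LB Λ b (3 * s)
  have e : 2 * (3 * s) + 1 = 6 * s + 1 := by ring
  rw [e] at this
  exact_mod_cast this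

end AL

namespace AL
variable {d : ℕ}

/-- the site `x` is bad at scale `s`. -/
def Bad (Λ : Finset (Fin d → ℤ)) (γ : ℝ) (v : (Fin d → ℤ) → ℝ) (E : ℝ) (s : ℕ) (κ : ℝ)
    (x : Fin d → ℤ) : Prop := ¬ Good Λ γ v E s (κ ^ 2) x

lemma Bad.congr {Λ : Finset (Fin d → ℤ)} {γ : ℝ} {v v' : (Fin d → ℤ) → ℝ} {E : ℝ} {s : ℕ} {κ : ℝ}
    {x : Fin d → ℤ} (h : Bad Λ γ v E s κ x) (hv : ∀ w ∈ Λ, Nr x w (s - 1) → v w = v' w) :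
    Bad Λ γ v' E s κ x :=
  fun hg => h (hg.congr fun w hw hn => (hv w hw hn).symm)

lemma Bad.congr_pot {Λ : Finset (Fin d → ℤ)} {γ : ℝ} {N : ℕ} {ω ω' : Λ → Fin N} {E : ℝ} {s : ℕ}
    {κ : ℝ} {x : Fin d → ℤ} (h : Bad Λ γ (potential N Λ ω) E s κ x)
    (hv : ∀ i : Λ, Nr x i (s - 1) → ω i = ω' i) :
    Bad Λ γ (potential N Λ ω') E s κ x :=
  h.congr fun w hw hn => pot_congr fun _ => hv ⟨w, hw⟩ hn

lemma bad_step {Λ : Finset (Fin d → ℤ)} {γ : ℝ} {v : (Fin d → ℤ) → ℝ} {E : ℝ} {s S n : ℕ} {κ : ℝ}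
    {x : Fin d → ℤ} (hx : x ∈ Λ) (hs : 1 ≤ s) (hκ : 0 < κ) (hκ1 : κ < 1)
    (hn : n * s + 12 * s ≤ S) (h : Bad Λ γ v E S (κ ^ n) x) :
    (∃ w1 ∈ Λ, ∃ w2 ∈ Λ, Nr x w1 (S - s) ∧ Nr x w2 (S - s) ∧ ¬ Nr w1 w2 (2 * s) ∧
      Bad Λ γ v E s κ w1 ∧ Bad Λ γ v E s κ w2) ∨
    ∃ b ∈ Λ, Nr x b (S - 5 * s) ∧ Wq Λ γ v E s κ b := by
  by_contra hcon
  push Not at hcon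
  apply h
  refine det_step hx hs hκ hκ1 hn ?_ hcon.2
  intro w1 h1 w2 h2 n1 n2 n12
  by_contra hc
  push Not at hc
  exact hcon.1 w1 h1 w2 h2 n1 n2 n12 hc.1 hc.2

lemma step_P {N : ℕ} (hN : 2 ≤ N) {γ : ℝ} {Λ : Finset (Fin d → ℤ)} {s S n : ℕ} {κ : ℝ}
    (hs : 1 ≤ s) (hκ : 0 < κ) (hκ1 : κ < 1) (hn : n * s + 12 * s ≤ S) {ε ε' E0 p pw : ℝ}
    (hε : ε' ≤ ε) (hpw : 0 ≤ pw)
    (hP : ∀ w ∈ Λ, prob (fun ω : Λ → Fin N =>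
      ∃ E, |E - E0| ≤ ε ∧ Bad Λ γ (potential N Λ ω) E s κ w) ≤ p)
    (hW : ∀ b, prob (fun ω : Λ → Fin N =>
      ∃ E, |E - E0| ≤ ε' ∧ Wq Λ γ (potential N Λ ω) E s κ b) ≤ pw)
    {x : Fin d → ℤ} (hx : x ∈ Λ) :
    prob (fun ω : Λ → Fin N => ∃ E, |E - E0| ≤ ε' ∧ Bad Λ γ (potential N Λ ω) E S (κ ^ n) x)
      ≤ (2 * S + 1) ^ (2 * d) * p ^ 2 + (2 * S + 1) ^ d * pw := by
  classical
  have hNp : 0 < N := by omega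
  have : Nonempty (Fin N) := ⟨⟨0, hNp⟩⟩
  have hcard : ((LB Λ x S).card : ℝ) ≤ (2 * S + 1) ^ d := by exact_mod_cast card_LB Λ x S
  set A : (Fin d → ℤ) → (Λ → Fin N) → Prop := fun w ω =>
    ∃ E, |E - E0| ≤ ε ∧ Bad Λ γ (potential N Λ ω) E s κ w with hA
  have key : ∀ ω : Λ → Fin N,
      (∃ E, |E - E0| ≤ ε' ∧ Bad Λ γ (potential N Λ ω) E S (κ ^ n) x) →
      (∃ q ∈ LB Λ x S ×ˢ LB Λ x S, ¬ Nr q.1 q.2 (2 * s) ∧ A q.1 ω ∧ A q.2 ω) ∨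
      ∃ b ∈ LB Λ x S, ∃ E, |E - E0| ≤ ε' ∧ Wq Λ γ (potential N Λ ω) E s κ b := by
    rintro ω ⟨E, hE, hbad⟩
    rcases bad_step hx hs hκ hκ1 hn hbad with ⟨w1, h1, w2, h2, n1, n2, n12, b1, b2⟩ | ⟨b, hb, hb2, hb3⟩
    · left
      refine ⟨(w1, w2), Finset.mem_product.2 ⟨mem_LB.2 ⟨h1, n1.mono (by omega)⟩,
        mem_LB.2 ⟨h2, n2.mono (by omega)⟩⟩, n12, ⟨E, hE.trans hε, b1⟩, ⟨E, hE.trans hε, b2⟩⟩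
    · right
      exact ⟨b, mem_LB.2 ⟨hb, hb2.mono (by omega)⟩, E, hE, hb3⟩
  refine (prob_mono key).trans ((prob_or _ _).trans (add_le_add ?_ ?_))
  · refine prob_exists_le _ _ (by positivity) ?_ ?_
    · rw [Finset.card_product, Nat.cast_mul, two_mul d, pow_add]
      gcongr
    · rintro ⟨w1, w2⟩ hq
      rw [Finset.mem_product] at hq
      have h1 := (mem_LB.1 hq.1).1
      have h2 := (mem_LB.1 hq.2).1
      by_cases hsep : Nr w1 w2 (2 * s)
      · refine (prob_mono (B := fun _ => False) fun ω h => h.1 hsep).trans ?_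
        rw [prob_false]; positivity
      refine (prob_mono (B := fun ω => A w1 ω ∧ A w2 ω) fun ω h => h.2).trans ?_
      rw [prob_indep (fun i : Λ => Nr w1 i (s - 1)) (A w1) (A w2), sq]
      · exact mul_le_mul (hP w1 h1) (hP w2 h2) (prob_nonneg _) ((prob_nonneg _).trans (hP w1 h1))
      · rintro ω ω' hag ⟨E, hE, hb⟩
        exact ⟨E, hE, hb.congr_pot hag⟩
      · rintro ω ω' hag ⟨E, hE, hb⟩
        refine ⟨E, hE, hb.congr_pot fun i hi => hag i fun hi' => hsep ?_⟩
        exact hi'.trans hi.symm (by omega)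
  · exact prob_exists_le _ _ hpw hcard fun b _ => hW b

lemma step_Q_half {N : ℕ} (hN : 2 ≤ N) {γ : ℝ} (hγ : 0 < γ) {Λ : Finset (Fin d → ℤ)} {s S : ℕ}
    {κ K : ℝ} (hs : 1 ≤ s) (hκ : 0 < κ) {ε' p' : ℝ} (hp' : 0 ≤ p')
    (hε : γ * 3 ^ d * κ * (6 * s + 1) ^ d ≤ ε')
    (hP : ∀ E0, ∀ w ∈ Λ, prob (fun ω : Λ → Fin N =>
      ∃ E, |E - E0| ≤ ε' ∧ Bad Λ γ (potential N Λ ω) E S K w) ≤ p')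
    {x y : Fin d → ℤ} (hy : y ∈ Λ) (hxy : ¬ Nr x y (2 * S)) {b : Fin d → ℤ}
    (hb : Nr x b (S - 5 * s)) :
    prob (fun ω : Λ → Fin N => ∃ E, Wq Λ γ (potential N Λ ω) E s κ b ∧
      Bad Λ γ (potential N Λ ω) E S K y) ≤ (6 * s + 1) ^ d * p' := by
  classical
  have hNp : 0 < N := by omega
  have : Nonempty (Fin N) := ⟨⟨0, hNp⟩⟩
  apply prob_cond (fun i : Λ => Nr x i (S - 1))
  intro ω1
  set I := specOn d γ (potential N Λ ω1) (LB Λ b (3 * s)) with hI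
  have hIc : (I.card : ℝ) ≤ (6 * s + 1) ^ d := by
    have h1 := (card_specOn γ (potential N Λ ω1) (LB Λ b (3 * s))).trans (card_LB Λ b (3 * s))
    have e : 2 * (3 * s) + 1 = 6 * s + 1 := by ring
    rw [e] at h1
    exact_mod_cast h1
  refine (prob_mono (B := fun ω2 : Λ → Fin N => ∃ lam ∈ I, ∃ E, |E - lam| ≤ ε' ∧
    Bad Λ γ (potential N Λ ω2) E S K y) ?_).trans
    (prob_exists_le I _ hp' hIc fun lam _ => hP lam y hy)
  rintro ω2 ⟨E, hW, hB⟩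
  obtain ⟨lam, hlam, hE⟩ := pin hγ hκ.le hW
  refine ⟨lam, ?_, E, hE.trans hε, hB.congr_pot fun i hi => mix_neg fun hi' => hxy ?_⟩
  · rw [hI]
    rw [specOn_congr (v' := potential N Λ ω1)] at hlam
    · exact hlam
    · intro w hw
      refine pot_congr fun hwΛ => mix_pos ?_
      have := (mem_LB.1 hw).2
      exact hb.trans this (by push_cast; omega)
  · exact hi'.trans hi.symm (by omega)

lemma step_Q {N : ℕ} (hN : 2 ≤ N) {γ : ℝ} (hγ : 0 < γ) {Λ : Finset (Fin d → ℤ)} {s S n : ℕ} {κ : ℝ}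
    (hs : 1 ≤ s) (hκ : 0 < κ) (hκ1 : κ < 1) (hn : n * s + 12 * s ≤ S) {ε' q p' : ℝ}
    (hp' : 0 ≤ p') (hε : γ * 3 ^ d * κ * (6 * s + 1) ^ d ≤ ε')
    (hP : ∀ E0, ∀ w ∈ Λ, prob (fun ω : Λ → Fin N =>
      ∃ E, |E - E0| ≤ ε' ∧ Bad Λ γ (potential N Λ ω) E S (κ ^ n) w) ≤ p')
    (hQ : ∀ w ∈ Λ, ∀ w' ∈ Λ, ¬ Nr w w' (2 * s) → prob (fun ω : Λ → Fin N =>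
      ∃ E, Bad Λ γ (potential N Λ ω) E s κ w ∧ Bad Λ γ (potential N Λ ω) E s κ w') ≤ q)
    {x y : Fin d → ℤ} (hx : x ∈ Λ) (hy : y ∈ Λ) (hxy : ¬ Nr x y (2 * S)) :
    prob (fun ω : Λ → Fin N => ∃ E, Bad Λ γ (potential N Λ ω) E S (κ ^ n) x ∧
        Bad Λ γ (potential N Λ ω) E S (κ ^ n) y)
      ≤ (2 * S + 1) ^ (4 * d) * q ^ 2 + 2 * ((2 * S + 1) ^ d * ((6 * s + 1) ^ d * p')) := by
  classical
  have hNp : 0 < N := by omega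
  have : Nonempty (Fin N) := ⟨⟨0, hNp⟩⟩
  have hcx : ((LB Λ x S).card : ℝ) ≤ (2 * S + 1) ^ d := by exact_mod_cast card_LB Λ x S
  have hcy : ((LB Λ y S).card : ℝ) ≤ (2 * S + 1) ^ d := by exact_mod_cast card_LB Λ y S
  set A : (Fin d → ℤ) → (Fin d → ℤ) → (Λ → Fin N) → Prop := fun w w' ω =>
    ∃ E, Bad Λ γ (potential N Λ ω) E s κ w ∧ Bad Λ γ (potential N Λ ω) E s κ w' with hA
  set Lx := LB Λ x S with hLx
  set Ly := LB Λ y S with hLy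
  have key : ∀ ω : Λ → Fin N,
      (∃ E, Bad Λ γ (potential N Λ ω) E S (κ ^ n) x ∧ Bad Λ γ (potential N Λ ω) E S (κ ^ n) y) →
      (∃ r ∈ (Lx ×ˢ Ly) ×ˢ (Lx ×ˢ Ly), (Nr x r.1.1 (S - s) ∧ Nr y r.1.2 (S - s) ∧
          Nr x r.2.1 (S - s) ∧ Nr y r.2.2 (S - s) ∧ ¬ Nr r.1.1 r.2.1 (2 * s) ∧
          ¬ Nr r.1.2 r.2.2 (2 * s)) ∧ A r.1.1 r.1.2 ω ∧ A r.2.1 r.2.2 ω) ∨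
      ((∃ b ∈ Lx, Nr x b (S - 5 * s) ∧ ∃ E, Wq Λ γ (potential N Λ ω) E s κ b ∧
        Bad Λ γ (potential N Λ ω) E S (κ ^ n) y) ∨
      (∃ b ∈ Ly, Nr y b (S - 5 * s) ∧ ∃ E, Wq Λ γ (potential N Λ ω) E s κ b ∧
        Bad Λ γ (potential N Λ ω) E S (κ ^ n) x)) := by
    rintro ω ⟨E, hbx, hby⟩
    rcases bad_step hx hs hκ hκ1 hn hbx with ⟨w1, h1, w2, h2, n1, n2, n12, b1, b2⟩ | ⟨b, hb, hb2, hb3⟩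
    · rcases bad_step hy hs hκ hκ1 hn hby with
        ⟨z1, h1', z2, h2', n1', n2', n12', b1', b2'⟩ | ⟨b, hb, hb2, hb3⟩
      · left
        refine ⟨((w1, z1), (w2, z2)), ?_, ⟨n1, n1', n2, n2', n12, n12'⟩, ⟨E, b1, b1'⟩, E, b2, b2'⟩
        simp only [Finset.mem_product, hLx, hLy, mem_LB]
        exact ⟨⟨⟨h1, n1.mono (by omega)⟩, ⟨h1', n1'.mono (by omega)⟩⟩,
          ⟨⟨h2, n2.mono (by omega)⟩, ⟨h2', n2'.mono (by omega)⟩⟩⟩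
      · right; right
        exact ⟨b, mem_LB.2 ⟨hb, hb2.mono (by omega)⟩, hb2, E, hb3, hbx⟩
    · right; left
      exact ⟨b, mem_LB.2 ⟨hb, hb2.mono (by omega)⟩, hb2, E, hb3, hby⟩
  have hxy' : ¬ Nr y x (2 * S) := fun h => hxy h.symm
  rw [two_mul ((2 * (S:ℝ) + 1) ^ d * ((6 * s + 1) ^ d * p'))]
  refine (prob_mono key).trans ((prob_or _ _).trans (add_le_add ?_
    ((prob_or _ _).trans (add_le_add ?_ ?_))))
  · refine prob_exists_le _ _ (by positivity) ?_ ?_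
    · rw [Finset.card_product, Finset.card_product]
      push_cast
      have e : (2 * (S:ℝ) + 1) ^ (4 * d) = ((2 * S + 1) ^ d * (2 * S + 1) ^ d) *
        ((2 * S + 1) ^ d * (2 * S + 1) ^ d) := by ring
      rw [e]
      gcongr
    · rintro ⟨⟨w1, z1⟩, ⟨w2, z2⟩⟩ hr
      simp only [Finset.mem_product, hLx, hLy, mem_LB] at hr
      obtain ⟨⟨⟨h1, -⟩, ⟨h1', -⟩⟩, ⟨⟨h2, -⟩, ⟨h2', -⟩⟩⟩ := hr
      dsimp only
      by_cases hc : (Nr x w1 (S - s) ∧ Nr y z1 (S - s) ∧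
          Nr x w2 (S - s) ∧ Nr y z2 (S - s) ∧ ¬ Nr w1 w2 (2 * s) ∧ ¬ Nr z1 z2 (2 * s))
      swap
      · refine (prob_mono (B := fun _ => False) fun ω h => hc h.1).trans ?_
        rw [prob_false]; positivity
      obtain ⟨n1, n1', n2, n2', n12, n12'⟩ := hc
      have far : ∀ w z, Nr x w (S - s) → Nr y z (S - s) → ¬ Nr w z (2 * s) := by
        intro w z hw hz h
        exact hxy ((hw.trans h le_rfl).trans hz.symm (by omega))
      refine (prob_mono (B := fun ω => A w1 z1 ω ∧ A w2 z2 ω) fun ω h => h.2).trans ?_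
      rw [prob_indep (fun i : Λ => Nr w1 i (s - 1) ∨ Nr z1 i (s - 1)) (A w1 z1) (A w2 z2), sq]
      · have q1 := hQ w1 h1 z1 h1' (far _ _ n1 n1')
        exact mul_le_mul q1 (hQ w2 h2 z2 h2' (far _ _ n2 n2')) (prob_nonneg _)
          ((prob_nonneg _).trans q1)
      · rintro ω ω' hag ⟨E, hb, hb'⟩
        exact ⟨E, hb.congr_pot fun i hi => hag i (Or.inl hi),
          hb'.congr_pot fun i hi => hag i (Or.inr hi)⟩
      · rintro ω ω' hag ⟨E, hb, hb'⟩
        refine ⟨E, hb.congr_pot fun i hi => hag i ?_, hb'.congr_pot fun i hi => hag i ?_⟩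
        · rintro (hi' | hi')
          · exact n12 (hi'.trans hi.symm (by omega))
          · exact far _ _ n2 n1' (hi.trans hi'.symm (by omega))
        · rintro (hi' | hi')
          · exact far _ _ n1 n2' (hi'.trans hi.symm (by omega))
          · exact n12' (hi'.trans hi.symm (by omega))
  · refine prob_exists_le _ _ (by positivity) hcx fun b _ => ?_
    by_cases hb : Nr x b (S - 5 * s)
    · exact (prob_mono fun ω h => h.2).trans (step_Q_half hN hγ hs hκ hp' hε hP hy hxy hb)
    · refine (prob_mono (B := fun _ => False) fun ω h => hb h.1).trans ?_
      rw [prob_false]; positivity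
  · refine prob_exists_le _ _ (by positivity) hcy fun b _ => ?_
    by_cases hb : Nr y b (S - 5 * s)
    · exact (prob_mono fun ω h => h.2).trans (step_Q_half hN hγ hs hκ hp' hε hP hx hxy' hb)
    · refine (prob_mono (B := fun _ => False) fun ω h => hb h.1).trans ?_
      rw [prob_false]; positivity

end AL

namespace AL
variable {d : ℕ}

/-- the scales -/
def sc (d : ℕ) : ℕ → ℕ
  | 0 => 4096 * d
  | k + 1 => 64 * 2 ^ k * sc d k

/-- number of steps -/
def nn (k : ℕ) : ℕ := 64 * 2 ^ k - 16

/-- decay exponents -/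
def ex (d : ℕ) : ℕ → ℕ
  | 0 => 16 * sc d 0
  | k + 1 => ex d k * nn k

lemma sc_zero (d : ℕ) : sc d 0 = 4096 * d := rfl
lemma sc_succ (d k : ℕ) : sc d (k + 1) = 64 * 2 ^ k * sc d k := rfl

lemma sc_step (d k : ℕ) : 64 * sc d k ≤ sc d (k + 1) := by
  rw [sc_succ]
  have : 1 ≤ 2 ^ k := Nat.one_le_two_pow
  nlinarith [Nat.zero_le (sc d k), Nat.mul_le_mul_right (sc d k) (Nat.mul_le_mul_left 64 this)]

lemma sc_ge (d k : ℕ) : 4096 * d ≤ sc d k := by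
  induction k with
  | zero => exact le_rfl
  | succ k ih => have := sc_step d k; omega

lemma sc_dvd (d k : ℕ) : 128 ∣ sc d k := by
  induction k with
  | zero => rw [sc_zero]; omega
  | succ k ih => rw [sc_succ]; exact ih.mul_left _

lemma sc_sq (hd : 1 ≤ d) (k : ℕ) : (64 * 2 ^ k) ^ 2 ≤ sc d k := by
  induction k with
  | zero => rw [sc_zero]; omega
  | succ k ih =>
    have h := sc_step d k
    have e : (64 * 2 ^ (k + 1)) ^ 2 = 4 * (64 * 2 ^ k) ^ 2 := by ring
    omega

lemma sc_three (hd : 1 ≤ d) (k : ℕ) : sc d (k + 1) ^ 2 ≤ sc d k ^ 3 := by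
  have := sc_sq hd k
  rw [sc_succ]
  calc (64 * 2 ^ k * sc d k) ^ 2 = (64 * 2 ^ k) ^ 2 * sc d k ^ 2 := by ring
    _ ≤ sc d k * sc d k ^ 2 := Nat.mul_le_mul_right _ this
    _ = _ := by ring

lemma sc_two (hd : 1 ≤ d) (k : ℕ) : sc d (k + 1) ≤ sc d k ^ 2 := by
  have := sc_sq hd k
  rw [sc_succ, sq]
  have h1 : 64 * 2 ^ k ≤ (64 * 2 ^ k) ^ 2 := Nat.le_self_pow (by norm_num) _
  exact Nat.mul_le_mul_right _ (h1.trans this)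

lemma nn_step (d k : ℕ) : nn k * sc d k + 12 * sc d k ≤ sc d (k + 1) := by
  rw [sc_succ, ← add_mul]
  apply Nat.mul_le_mul_right
  have : 1 ≤ 2 ^ k := Nat.one_le_two_pow
  unfold nn; omega

lemma ex_inv (d k : ℕ) : 8 * sc d k * (2 ^ k + 1) ≤ ex d k * 2 ^ k := by
  induction k with
  | zero => simp [ex]; omega
  | succ k ih =>
    have h1 : 1 ≤ 2 ^ k := Nat.one_le_two_pow
    have e : ex d (k + 1) * 2 ^ (k + 1) = 2 * nn k * (ex d k * 2 ^ k) := by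
      rw [ex]; ring
    rw [e]
    refine le_trans ?_ (Nat.mul_le_mul_left _ ih)
    rw [sc_succ, pow_succ]
    have hn : nn k + 16 = 64 * 2 ^ k := by unfold nn; omega
    set t := 2 ^ k
    have h2 : 64 * t * (t * 2 + 1) ≤ 2 * nn k * (t + 1) := by
      have : nn k = 64 * t - 16 := by omega
      zify [show 16 ≤ 64 * t by omega] at this ⊢
      rw [this]
      have : (1:ℤ) ≤ t := by exact_mod_cast h1
      nlinarith
    calc 8 * (64 * t * sc d k) * (t * 2 + 1) = 8 * sc d k * (64 * t * (t * 2 + 1)) := by ring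
      _ ≤ 8 * sc d k * (2 * nn k * (t + 1)) := Nat.mul_le_mul_left _ h2
      _ = _ := by ring

lemma ex_ge (d k : ℕ) : 8 * sc d k ≤ ex d k := by
  have h := ex_inv d k
  have h1 : 0 < 2 ^ k := by positivity
  have h2 : 8 * sc d k * 2 ^ k ≤ ex d k * 2 ^ k := le_trans (Nat.mul_le_mul_left _ (by omega)) h
  exact Nat.le_of_mul_le_mul_right h2 h1

/-- big constant -/
def C0 (d P : ℕ) : ℕ := 4 * 15 ^ d * 2 ^ (3 * d + 2 * P) * (2 * 3 ^ d) ^ 6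

/-- parameter conditions -/
structure Par (d N q P : ℕ) (g γ : ℝ) : Prop where
  hd : 1 ≤ d
  hN : 2 ≤ N
  hg0 : 0 < g
  hgB : g * (64 * N * d * 21 ^ d) ≤ 1
  hγ : γ = g ^ 64
  hq : 24 * d + 1 ≤ q
  hP : P = q + 3 * d + 1
  hN1 : (2 * sc d 0 + 1) ^ (2 * d) * (sc d 0) ^ P ≤ N
  hN2 : (C0 d P) ^ 128 ≤ N

/-- decay factor -/
def kap (d : ℕ) (g : ℝ) (k : ℕ) : ℝ := g ^ ex d k

/-- energy windows -/
def win (d N : ℕ) (g : ℝ) : ℕ → ℝ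
  | 0 => 1 / (8 * N)
  | k + 1 => g ^ (6 * sc d k)

lemma kap_succ (d : ℕ) (g : ℝ) (k : ℕ) : kap d g (k + 1) = kap d g k ^ nn k := by
  rw [kap, kap, ex, pow_mul]

namespace Par
variable {N q P : ℕ} {g γ : ℝ}

lemma one_le_sc (h : Par d N q P g γ) (k : ℕ) : 4096 ≤ sc d k := by
  have := sc_ge d k; have := h.hd; omega

lemma hNr (h : Par d N q P g γ) : (2:ℝ) ≤ N := by exact_mod_cast h.hN
lemma hdr (h : Par d N q P g γ) : (1:ℝ) ≤ d := by exact_mod_cast h.hd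

/-- all elementary smallness facts -/
lemma small (h : Par d N q P g γ) : g * (64 * N) ≤ 1 ∧ g * (64 * N * d) ≤ 1 ∧
    g * (64 * N * 3 ^ d) ≤ 1 ∧ g * 7 ^ d ≤ 1 ∧ g < 1 := by
  have h1 := h.hgB
  have hN := h.hNr
  have hd := h.hdr
  have hg := h.hg0
  have h21 : (21:ℝ) ^ d = 3 ^ d * 7 ^ d := by rw [← mul_pow]; norm_num
  have h3 : (1:ℝ) ≤ 3 ^ d := one_le_pow₀ (by norm_num)
  have h7 : (1:ℝ) ≤ 7 ^ d := one_le_pow₀ (by norm_num)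
  rw [h21] at h1
  have a0 : (1:ℝ) ≤ 64 * N := by linarith
  have mono : ∀ {x y : ℝ}, x ≤ y → g * y ≤ 1 → g * x ≤ 1 := fun hxy hy =>
    (mul_le_mul_of_nonneg_left hxy hg.le).trans hy
  have b1 : (64 * N : ℝ) ≤ 64 * N * d * (3 ^ d * 7 ^ d) := by
    have : (1:ℝ) ≤ d * (3 ^ d * 7 ^ d) := one_le_mul_of_one_le_of_one_le hd
      (one_le_mul_of_one_le_of_one_le h3 h7)
    calc (64 * N : ℝ) ≤ 64 * N * (d * (3 ^ d * 7 ^ d)) := le_mul_of_one_le_right (by positivity) this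
      _ = _ := by ring
  have b2 : (64 * N * d : ℝ) ≤ 64 * N * d * (3 ^ d * 7 ^ d) :=
    le_mul_of_one_le_right (by positivity) (one_le_mul_of_one_le_of_one_le h3 h7)
  have b3 : (64 * N * 3 ^ d : ℝ) ≤ 64 * N * d * (3 ^ d * 7 ^ d) := by
    calc (64 * N * 3 ^ d : ℝ) ≤ 64 * N * 3 ^ d * (d * 7 ^ d) :=
          le_mul_of_one_le_right (by positivity) (one_le_mul_of_one_le_of_one_le hd h7)
      _ = _ := by ring
  have b4 : (7 ^ d : ℝ) ≤ 64 * N * d * (3 ^ d * 7 ^ d) := by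
    calc (7 ^ d : ℝ) ≤ 7 ^ d * ((64 * N * d) * 3 ^ d) :=
          le_mul_of_one_le_right (by positivity) (one_le_mul_of_one_le_of_one_le
            (one_le_mul_of_one_le_of_one_le a0 hd) h3)
      _ = _ := by ring
  refine ⟨mono b1 h1, mono b2 h1, mono b3 h1, mono b4 h1, ?_⟩
  have := mono b1 h1
  nlinarith

lemma γ_pos (h : Par d N q P g γ) : 0 < γ := by
  rw [h.hγ]; have := h.hg0; positivity

lemma γ_le (h : Par d N q P g γ) : γ ≤ g := by
  have h1 := h.small.2.2.2.2
  have h0 := h.hg0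
  rw [h.hγ]
  calc g ^ 64 ≤ g ^ 1 := pow_le_pow_of_le_one h0.le h1.le (by norm_num)
    _ = g := pow_one g

lemma kap_pos (h : Par d N q P g γ) (k : ℕ) : 0 < kap d g k := by
  have := h.hg0; unfold kap; positivity

lemma kap_le (h : Par d N q P g γ) (k : ℕ) : kap d g k ≤ g ^ (8 * sc d k) :=
  pow_le_pow_of_le_one h.hg0.le h.small.2.2.2.2.le (ex_ge d k)

lemma kap_lt_one (h : Par d N q P g γ) (k : ℕ) : kap d g k < 1 := by
  refine (h.kap_le k).trans_lt (pow_lt_one₀ h.hg0.le h.small.2.2.2.2 ?_)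
  have := h.one_le_sc k
  omega

lemma poly (s : ℕ) (hs : 1 ≤ s) : (6 * (s:ℝ) + 1) ≤ 7 ^ s := by
  have : ∀ s : ℕ, 6 * s + 1 ≤ 7 ^ s := by
    intro s
    induction s with
    | zero => simp
    | succ s ih => rw [pow_succ]; omega
  exact_mod_cast this s

lemma poly_d (h : Par d N q P g γ) (k : ℕ) :
    (6 * (sc d k : ℝ) + 1) ^ d * g ^ sc d k ≤ 1 := by
  have h1 := poly (sc d k) (by have := h.one_le_sc k; omega)
  have h0 := h.hg0
  calc (6 * (sc d k : ℝ) + 1) ^ d * g ^ sc d k ≤ (7 ^ sc d k) ^ d * g ^ sc d k := by gcongr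
    _ = (g * 7 ^ d) ^ sc d k := by rw [mul_pow, ← pow_mul, ← pow_mul, mul_comm d]; ring
    _ ≤ 1 := pow_le_one₀ (by positivity) h.small.2.2.2.1

lemma win_mono (h : Par d N q P g γ) (k : ℕ) : win d N g (k + 1) ≤ win d N g k := by
  have h0 := h.hg0
  have h1 := h.small.2.2.2.2
  have hN := h.hNr
  rcases k with _ | k
  · show g ^ (6 * sc d 0) ≤ 1 / (8 * N)
    rw [le_div_iff₀ (by positivity)]
    have : g ^ (6 * sc d 0) ≤ g ^ 1 := pow_le_pow_of_le_one h0.le h1.le (by have := h.one_le_sc 0; omega)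
    rw [pow_one] at this
    have := h.small.1
    nlinarith
  · show g ^ (6 * sc d (k + 1)) ≤ g ^ (6 * sc d k)
    exact pow_le_pow_of_le_one h0.le h1.le (by have := sc_step d k; omega)

lemma win_pin (h : Par d N q P g γ) (k : ℕ) :
    γ * 3 ^ d * kap d g k * (6 * sc d k + 1) ^ d ≤ win d N g (k + 1) := by
  have h0 := h.hg0
  have h1 := h.small.2.2.2.2
  have h3 : γ * 3 ^ d ≤ 1 := by
    have := h.small.2.2.1
    have := h.γ_le
    have hN := h.hNr
    calc γ * 3 ^ d ≤ g * 3 ^ d := by gcongr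
      _ ≤ g * (64 * N * 3 ^ d) := by
        gcongr
        apply le_mul_of_one_le_left (by positivity); linarith
      _ ≤ 1 := h.small.2.2.1
  show _ ≤ g ^ (6 * sc d k)
  have hp := h.poly_d k
  have hk := h.kap_le k
  have hγ := h.γ_pos
  calc γ * 3 ^ d * kap d g k * (6 * sc d k + 1) ^ d
      ≤ 1 * g ^ (8 * sc d k) * (6 * sc d k + 1) ^ d := by
        have := (h.kap_pos k).le
        gcongr
    _ = g ^ (7 * sc d k) * ((6 * sc d k + 1) ^ d * g ^ sc d k) := by ring
    _ ≤ g ^ (7 * sc d k) * 1 := by gcongr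
    _ ≤ g ^ (6 * sc d k) := by
        rw [mul_one]
        exact pow_le_pow_of_le_one h0.le h1.le (by omega)

lemma γ3 (h : Par d N q P g γ) : γ * 3 ^ d ≤ 1 / 2 := by
  have hN := h.hNr
  have := h.γ_le
  have h0 := h.hg0
  have : γ * 3 ^ d ≤ g * 3 ^ d := by gcongr
  have h3 := h.small.2.2.1
  have : 0 ≤ g * 3 ^ d := by positivity
  nlinarith

lemma wegner_k (h : Par d N q P g γ) (k : ℕ) {Λ : Finset (Fin d → ℤ)} {a c : Fin d → ℤ}
    (hΛ : Λ = Finset.Icc a c) (i0 : Fin d) (hside : a i0 + sc d (k + 1) ≤ c i0) (E0 : ℝ)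
    (b : Fin d → ℤ) :
    prob (fun ω : Λ → Fin N => ∃ E, |E - E0| ≤ win d N g (k + 1) ∧
      Wq Λ γ (potential N Λ ω) E (sc d k) (kap d g k) b)
      ≤ 2 * (4 * sc d k + 1) ^ d * (2 * 3 ^ d) ^ (5 * sc d k + 1) * (1 / (N : ℝ) ^ (sc d k / 128)) := by
  have h0 := h.hg0
  obtain ⟨s1, s2, s3, s4, s5⟩ := h.small
  have hN := h.hNr
  have hγ := h.γ_pos
  have hγg := h.γ_le
  have hs := h.one_le_sc k
  obtain ⟨m, hm⟩ := sc_dvd d k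
  have hmd : sc d k / 128 = m := by omega
  rw [hmd]
  set s := sc d k with hsdef
  set η := γ / (3 ^ d + 3) with hη
  have h3 : (1:ℝ) ≤ 3 ^ d := one_le_pow₀ (by norm_num)
  have hγη : g ^ 128 ≤ η := by
    rw [hη, le_div_iff₀ (by positivity)]
    have e : g ^ 128 = γ * γ := by rw [h.hγ]; ring
    rw [e]
    have : γ * (3 ^ d + 3) ≤ 1 := by
      have : γ * (3 ^ d + 3) ≤ g * (64 * N * 3 ^ d) := by
        gcongr
        nlinarith
      linarith
    nlinarith
  have hη0 : 0 < η := by positivity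
  have hηg : η ≤ g := by
    refine le_trans ?_ hγg
    apply div_le_self hγ.le
    linarith
  have hpow : ∀ j, g ^ (128 * j) ≤ η ^ j := by
    intro j; rw [pow_mul]; gcongr
  have hsg : sc d (k + 1) ≥ 64 * s := sc_step d k
  refine wegner h.hN hγ h.γ3 hΛ i0 (by omega) (by omega) hη ?_ (h.kap_pos k).le ?_ ?_ b ?_
  · have : 4 * N * η ^ 2 = (4 * N * η) * η := by ring
    rw [this]
    have : 4 * N * η ≤ 4 * N * g := by gcongr
    have : 4 * N * η ≤ 1 := by nlinarith
    nlinarith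
  · refine lt_of_lt_of_le ?_ (hpow (2 * m + 1))
    refine lt_of_le_of_lt (h.kap_le k) ?_
    exact pow_lt_pow_right_of_lt_one₀ h0 s5 (by omega)
  · show (2 * g ^ (6 * s) + 2 * kap d g k * γ * 3 ^ d) * (6 * s + 1) ^ d < η ^ (4 * m) / (2 * N)
    rw [lt_div_iff₀ (by positivity)]
    refine lt_of_lt_of_le ?_ (hpow (4 * m))
    have e : 128 * (4 * m) = 4 * s := by omega
    rw [e]
    have hk := h.kap_le k
    have hp := h.poly_d k
    have hg3 := h.γ3
    have k1 : kap d g k * (γ * 3 ^ d) ≤ g ^ (6 * s) * 1 := by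
      refine mul_le_mul (hk.trans (pow_le_pow_of_le_one h0.le s5.le (by omega))) (by linarith)
        (by positivity) (by positivity)
    have k2 : (2 * g ^ (6 * s) + 2 * kap d g k * γ * 3 ^ d) ≤ 4 * g ^ (6 * s) := by nlinarith
    have k3 : 8 * N * g ^ s < 1 := by
      have : g ^ s ≤ g ^ 1 := pow_le_pow_of_le_one h0.le s5.le (by omega)
      rw [pow_one] at this
      have : 8 * N * g ^ s ≤ 8 * N * g := by gcongr
      nlinarith
    calc (2 * g ^ (6 * s) + 2 * kap d g k * γ * 3 ^ d) * (6 * s + 1) ^ d * (2 * N)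
        ≤ 4 * g ^ (6 * s) * (6 * s + 1) ^ d * (2 * N) := by gcongr
      _ = g ^ (4 * s) * (8 * N * g ^ s) * ((6 * s + 1) ^ d * g ^ s) := by ring
      _ ≤ g ^ (4 * s) * (8 * N * g ^ s) * 1 := by gcongr
      _ < g ^ (4 * s) * 1 * 1 := by
          rw [mul_one, mul_one, mul_one]
          exact mul_lt_of_lt_one_right (by positivity) k3
      _ = g ^ (4 * s) := by ring
  · show 0 ≤ g ^ (6 * sc d k)
    positivity

end Par

end AL

namespace AL
variable {d : ℕ}

lemma Good.mono {Λ : Finset (Fin d → ℤ)} {γ : ℝ} {v : (Fin d → ℤ) → ℝ} {E : ℝ} {s : ℕ} {δ δ' : ℝ}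
    {x : Fin d → ℤ} (hx : x ∈ Λ) (h : Good Λ γ v E s δ x) (hδ : δ ≤ δ') :
    Good Λ γ v E s δ' x := by
  intro u M h1 h2
  have hM : 0 ≤ M := (abs_nonneg _).trans (h2 x hx (Nr.refl x (by positivity)))
  exact (h u M h1 h2).trans (mul_le_mul_of_nonneg_right hδ hM)

lemma prob_near {N : ℕ} (hN : 2 ≤ N) {Λ : Finset (Fin d → ℤ)} {w : Fin d → ℤ} (hw : w ∈ Λ) (E0 : ℝ) :
    prob (fun ω : Λ → Fin N => |potential N Λ ω w - E0| < 1 / (4 * N)) ≤ 1 / N := by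
  classical
  have : Nonempty (Fin N) := ⟨⟨0, by omega⟩⟩
  have hNr : (2:ℝ) ≤ N := by exact_mod_cast hN
  have h := prob_fiber {(⟨w, hw⟩ : Λ)} (fun ω : Λ → Fin N => |potential N Λ ω w - E0| < 1 / (4 * N)) (by
    intro ω ω' h1 h2 hag
    funext i
    by_cases hi : i = ⟨w, hw⟩
    · rw [hi]
      rcases pot_diff hN ω ω' hw hw with h | h
      · exact h
      · exfalso
        have e : (1:ℝ) / (4 * N) = (1 / N) / 4 := by field_simp
        have hp : (0:ℝ) < 1 / N := by positivity
        rw [e, abs_lt] at h1 h2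
        have : |potential N Λ ω w - potential N Λ ω' w| < 1 / N := by
          rw [abs_lt]; constructor <;> linarith
        linarith
    · exact hag i (by simpa using hi))
  simpa using h

lemma prob_eq_sites {N : ℕ} (hN : 2 ≤ N) {Λ : Finset (Fin d → ℤ)} {w w' : Fin d → ℤ} (hw : w ∈ Λ)
    (hw' : w' ∈ Λ) (hne : w ≠ w') :
    prob (fun ω : Λ → Fin N => |potential N Λ ω w - potential N Λ ω w'| < 1 / N) ≤ 1 / N := by
  classical
  have : Nonempty (Fin N) := ⟨⟨0, by omega⟩⟩
  have h := prob_fiber {(⟨w, hw⟩ : Λ)}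
    (fun ω : Λ → Fin N => |potential N Λ ω w - potential N Λ ω w'| < 1 / N) (by
    intro ω ω' h1 h2 hag
    have a1 : ω ⟨w, hw⟩ = ω ⟨w', hw'⟩ :=
      (pot_diff hN ω ω hw hw').resolve_right (not_le.2 h1)
    have a2 : ω' ⟨w, hw⟩ = ω' ⟨w', hw'⟩ :=
      (pot_diff hN ω' ω' hw hw').resolve_right (not_le.2 h2)
    have a3 : ω ⟨w', hw'⟩ = ω' ⟨w', hw'⟩ := hag _ (by simpa using hne.symm)
    funext i
    by_cases hi : i = ⟨w, hw⟩
    · rw [hi, a1, a2, a3]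
    · exact hag i (by simpa using hi))
  simpa using h

lemma bad_near {N : ℕ} (hN : 2 ≤ N) {γ : ℝ} (hγ : 0 < γ) (hγd : 2 * d * γ ≤ 1 / (16 * N))
    {Λ : Finset (Fin d → ℤ)} {v : (Fin d → ℤ) → ℝ} {E : ℝ} {s : ℕ} {δ : ℝ}
    {x : Fin d → ℤ} (hx : x ∈ Λ) (hδ : (16 * N * 3 ^ d * γ) ^ s ≤ δ)
    (h : ¬ Good Λ γ v E s δ x) : ∃ w ∈ Λ, Nr x w (s - 1) ∧ |v w - E| < 1 / (8 * N) := by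
  have hNr : (2:ℝ) ≤ N := by exact_mod_cast hN
  by_contra hcon
  push Not at hcon
  apply h
  have := good_base (θ := 1 / (8 * N)) hx hγ (by positivity)
    (hγd.trans (le_of_eq (by field_simp; norm_num))) hcon
  refine this.mono hx (le_trans (le_of_eq ?_) hδ)
  congr 1
  field_simp
  norm_num

namespace Par
variable {N q P : ℕ} {g γ : ℝ}

lemma hγd (h : Par d N q P g γ) : 2 * d * γ ≤ 1 / (16 * N) := by
  have hN := h.hNr
  rw [le_div_iff₀ (by positivity)]
  have h2 := h.small.2.1
  have : γ * (64 * N * d) ≤ g * (64 * N * d) := by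
    have := h.γ_le
    gcongr
  have : 0 ≤ γ * (64 * N * d) := by have := h.γ_pos; positivity
  nlinarith

lemma bad0_near (h : Par d N q P g γ) {Λ : Finset (Fin d → ℤ)} {v : (Fin d → ℤ) → ℝ} {E : ℝ}
    {x : Fin d → ℤ} (hx : x ∈ Λ) (hb : Bad Λ γ v E (sc d 0) (kap d g 0) x) :
    ∃ w ∈ Λ, Nr x w ((sc d 0 : ℕ) - 1) ∧ |v w - E| < 1 / (8 * N) := by
  refine bad_near h.hN h.γ_pos h.hγd hx ?_ hb
  have hg := h.hg0
  have hN := h.hNr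
  have hγ := h.γ_pos
  have e : kap d g 0 ^ 2 = (g ^ 32) ^ sc d 0 := by
    rw [kap, ex, ← pow_mul, ← pow_mul]; congr 1; ring
  rw [e]
  gcongr
  have h3 := h.small.2.2.1
  have h5 := h.small.2.2.2.2
  have e2 : γ = g ^ 31 * g ^ 32 * g := by rw [h.hγ]; ring
  have e3 : g ^ 31 ≤ 1 := pow_le_one₀ hg.le h5.le
  calc 16 * N * 3 ^ d * γ = (g ^ 31 * g ^ 32) * (g * (64 * N * 3 ^ d)) / 4 := by rw [e2]; ring
    _ ≤ (1 * g ^ 32) * 1 / 4 := by gcongr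
    _ ≤ g ^ 32 := by have : 0 < g ^ 32 := by positivity
                     linarith

lemma base_P (h : Par d N q P g γ) {Λ : Finset (Fin d → ℤ)} {x : Fin d → ℤ} (hx : x ∈ Λ) (E0 : ℝ) :
    prob (fun ω : Λ → Fin N => ∃ E, |E - E0| ≤ win d N g 0 ∧
      Bad Λ γ (potential N Λ ω) E (sc d 0) (kap d g 0) x) ≤ 1 / (sc d 0 : ℝ) ^ P := by
  have hNr := h.hNr
  have hs := h.one_le_sc 0
  have hs' : (0:ℝ) < sc d 0 := by exact_mod_cast (by omega : 0 < sc d 0)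
  have hcard : ((LB Λ x (sc d 0)).card : ℝ) ≤ (2 * sc d 0 + 1) ^ d := by
    exact_mod_cast card_LB Λ x (sc d 0)
  refine (prob_mono (B := fun ω : Λ → Fin N => ∃ w ∈ LB Λ x (sc d 0),
    |potential N Λ ω w - E0| < 1 / (4 * N)) ?_).trans
    ((prob_exists_le _ _ (c := 1 / (N:ℝ)) (by positivity) hcard
      fun w hw => prob_near h.hN (mem_LB.1 hw).1 E0).trans ?_)
  · rintro ω ⟨E, hE, hb⟩
    obtain ⟨w, hw, hn, hv⟩ := h.bad0_near hx hb
    refine ⟨w, mem_LB.2 ⟨hw, hn.mono (by omega)⟩, ?_⟩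
    change |E - E0| ≤ 1 / (8 * N) at hE
    have e : (1:ℝ) / (4 * N) = 1 / (8 * N) + 1 / (8 * N) := by field_simp; norm_num
    rw [e, abs_lt]
    rw [abs_le] at hE
    rw [abs_lt] at hv
    constructor <;> linarith
  · rw [mul_one_div, div_le_div_iff₀ (by positivity) (by positivity), one_mul]
    have h1 : (2 * (sc d 0 : ℝ) + 1) ^ (2 * d) * (sc d 0) ^ P ≤ N := by exact_mod_cast h.hN1
    refine le_trans ?_ h1
    gcongr
    · linarith
    · omega

lemma base_Q (h : Par d N q P g γ) {Λ : Finset (Fin d → ℤ)} {x y : Fin d → ℤ} (hx : x ∈ Λ)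
    (hy : y ∈ Λ) (hxy : ¬ Nr x y (2 * sc d 0)) :
    prob (fun ω : Λ → Fin N => ∃ E, Bad Λ γ (potential N Λ ω) E (sc d 0) (kap d g 0) x ∧
      Bad Λ γ (potential N Λ ω) E (sc d 0) (kap d g 0) y) ≤ 1 / (sc d 0 : ℝ) ^ q := by
  have hNr := h.hNr
  have hs := h.one_le_sc 0
  have hs' : (1:ℝ) ≤ sc d 0 := by exact_mod_cast (by omega : 1 ≤ sc d 0)
  have hcx : ((LB Λ x (sc d 0)).card : ℝ) ≤ (2 * sc d 0 + 1) ^ d := by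
    exact_mod_cast card_LB Λ x (sc d 0)
  have hcy : ((LB Λ y (sc d 0)).card : ℝ) ≤ (2 * sc d 0 + 1) ^ d := by
    exact_mod_cast card_LB Λ y (sc d 0)
  refine (prob_mono (B := fun ω : Λ → Fin N => ∃ r ∈ LB Λ x (sc d 0) ×ˢ LB Λ y (sc d 0), r.1 ≠ r.2 ∧
    |potential N Λ ω r.1 - potential N Λ ω r.2| < 1 / N) ?_).trans
    ((prob_exists_le _ _ (n := (2 * sc d 0 + 1) ^ (2 * d)) (c := 1 / (N:ℝ)) (by positivity) ?_ ?_).trans ?_)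
  · rintro ω ⟨E, hb, hb'⟩
    obtain ⟨w, hw, hn, hv⟩ := h.bad0_near hx hb
    obtain ⟨w', hw', hn', hv'⟩ := h.bad0_near hy hb'
    refine ⟨(w, w'), Finset.mem_product.2 ⟨mem_LB.2 ⟨hw, hn.mono (by omega)⟩,
      mem_LB.2 ⟨hw', hn'.mono (by omega)⟩⟩, ?_, ?_⟩
    · intro (e : w = w')
      rw [← e] at hn'
      exact hxy (hn.trans hn'.symm (by omega))
    · have e : (1:ℝ) / N = 8 * (1 / (8 * N)) := by field_simp
      have hp : (0:ℝ) < 1 / (8 * N) := by positivity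
      rw [e, abs_lt]
      rw [abs_lt] at hv hv'
      constructor <;> dsimp only <;> linarith
  · rw [Finset.card_product, Nat.cast_mul, two_mul d, pow_add]
    gcongr
  · rintro ⟨w, w'⟩ hr
    rw [Finset.mem_product] at hr
    by_cases hne : w = w'
    · refine (prob_mono (B := fun _ => False) fun ω hh => hh.1 hne).trans ?_
      rw [prob_false]; positivity
    · exact (prob_mono fun ω hh => hh.2).trans
        (prob_eq_sites h.hN (mem_LB.1 hr.1).1 (mem_LB.1 hr.2).1 hne)
  · rw [mul_one_div, div_le_div_iff₀ (by positivity) (by positivity), one_mul]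
    have h1 : (2 * (sc d 0 : ℝ) + 1) ^ (2 * d) * (sc d 0) ^ P ≤ N := by exact_mod_cast h.hN1
    refine le_trans ?_ h1
    gcongr
    have := h.hP; omega

/-- generic numeric absorption -/
lemma absorb (h : Par d N q P g γ) (k j R : ℕ) (hR : 6 * j + 1 ≤ R) :
    (2 * (sc d (k + 1) : ℝ) + 1) ^ j * (1 / (sc d k : ℝ) ^ R) ^ 2 ≤
      1 / 2 * (1 / (sc d (k + 1) : ℝ) ^ R) := by
  have hs := h.one_le_sc k
  have hst := sc_step d k
  have h3 : (sc d (k + 1) : ℝ) ^ 2 ≤ (sc d k : ℝ) ^ 3 := by exact_mod_cast sc_three h.hd k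
  have h2 : (sc d (k + 1) : ℝ) ≤ (sc d k : ℝ) ^ 2 := by exact_mod_cast sc_two h.hd k
  have hs' : (4:ℝ) ≤ sc d k := by exact_mod_cast (by omega : 4 ≤ sc d k)
  have hS' : (4:ℝ) ≤ sc d (k + 1) := by exact_mod_cast (by omega : 4 ≤ sc d (k + 1))
  set s : ℝ := (sc d k : ℝ) with hsdef
  set S : ℝ := (sc d (k + 1) : ℝ) with hSdef
  have e : (2 * S + 1) ^ j * (1 / s ^ R) ^ 2 = ((2 * S + 1) ^ j) / s ^ (2 * R) := by
    rw [one_div, inv_pow, ← pow_mul, mul_comm R 2]; rfl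
  have e2 : 1 / 2 * (1 / S ^ R) = 1 / (2 * S ^ R) := by
    field_simp
  rw [e, e2, div_le_div_iff₀ (by positivity) (by positivity), one_mul]
  have key : ((2 * S + 1) ^ j * (2 * S ^ R)) ^ 2 ≤ (s ^ (2 * R)) ^ 2 := by
    have a1 : 2 * S + 1 ≤ s ^ 3 := by
      calc 2 * S + 1 ≤ 4 * S := by linarith
        _ ≤ s * s ^ 2 := by gcongr
        _ = s ^ 3 := by ring
    calc ((2 * S + 1) ^ j * (2 * S ^ R)) ^ 2 = ((2 * S + 1) ^ j) ^ 2 * 4 * (S ^ 2) ^ R := by ring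
      _ ≤ ((s ^ 3) ^ j) ^ 2 * s * (s ^ 3) ^ R := by gcongr
      _ = s ^ (6 * j + 1 + 3 * R) := by ring
      _ ≤ s ^ (4 * R) := pow_le_pow_right₀ (by linarith) (by omega)
      _ = _ := by ring
  exact (abs_le_of_sq_le_sq' key (by positivity)).2

lemma wegner_num (h : Par d N q P g γ) (k : ℕ) :
    (2 * (sc d (k + 1) : ℝ) + 1) ^ d * (2 * (4 * sc d k + 1) ^ d * (2 * 3 ^ d) ^ (5 * sc d k + 1) *
      (1 / (N : ℝ) ^ (sc d k / 128))) ≤ 1 / 2 * (1 / (sc d (k + 1) : ℝ) ^ P) := by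
  have hNr := h.hNr
  have hs := h.one_le_sc k
  have hst := sc_step d k
  obtain ⟨m, hm⟩ := sc_dvd d k
  have hmd : sc d k / 128 = m := by omega
  rw [hmd]
  have h2 : (sc d (k + 1) : ℝ) ≤ (sc d k : ℝ) ^ 2 := by exact_mod_cast sc_two h.hd k
  have hC : ((C0 d P : ℕ) : ℝ) ^ sc d k ≤ (N:ℝ) ^ m := by
    rw [hm, pow_mul]
    gcongr
    exact_mod_cast h.hN2
  have hs' : (4:ℝ) ≤ sc d k := by exact_mod_cast (by omega : 4 ≤ sc d k)
  have hS' : (4:ℝ) ≤ sc d (k + 1) := by exact_mod_cast (by omega : 4 ≤ sc d (k + 1))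
  have hexp : (sc d k : ℝ) ≤ 2 ^ sc d k := by exact_mod_cast (Nat.lt_two_pow_self).le
  set t := sc d k with ht
  set S : ℝ := (sc d (k + 1) : ℝ) with hSdef
  have e2 : 1 / 2 * (1 / S ^ P) = 1 / (2 * S ^ P) := by field_simp
  rw [e2, mul_one_div, mul_div_assoc', div_le_div_iff₀ (by positivity) (by positivity), one_mul]
  refine le_trans ?_ hC
  have h6 : (1:ℝ) ≤ 2 * 3 ^ d := by
    have : (1:ℝ) ≤ 3 ^ d := one_le_pow₀ (by norm_num)
    linarith
  have b1 : 2 * S + 1 ≤ 3 * (2 ^ t) ^ 2 := by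
    have : (t:ℝ) ^ 2 ≤ (2 ^ t) ^ 2 := by gcongr
    linarith
  have b2 : 4 * (t:ℝ) + 1 ≤ 5 * 2 ^ t := by linarith
  have b3 : S ≤ (2 ^ t) ^ 2 := by
    have : (t:ℝ) ^ 2 ≤ (2 ^ t) ^ 2 := by gcongr
    linarith
  have b4 : (2 * 3 ^ d : ℝ) ^ (5 * t + 1) ≤ (2 * 3 ^ d) ^ (6 * t) :=
    pow_le_pow_right₀ h6 (by omega)
  calc (2 * S + 1) ^ d * (2 * (4 * (t:ℝ) + 1) ^ d * (2 * 3 ^ d) ^ (5 * t + 1)) * (2 * S ^ P)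
      ≤ (3 * (2 ^ t) ^ 2) ^ d * (2 * (5 * 2 ^ t) ^ d * (2 * 3 ^ d) ^ (6 * t)) *
        (2 * ((2 ^ t) ^ 2) ^ P) := by gcongr
    _ = (4 * 15 ^ d) * ((2 ^ (3 * d + 2 * P)) ^ t * ((2 * 3 ^ d) ^ 6) ^ t) := by
        have : (15:ℝ) ^ d = 3 ^ d * 5 ^ d := by rw [← mul_pow]; norm_num
        rw [this, ← pow_mul (2 * 3 ^ d : ℝ) 6 t]
        generalize (2 * 3 ^ d : ℝ) ^ (6 * t) = Z
        ring
    _ ≤ (4 * 15 ^ d) ^ t * ((2 ^ (3 * d + 2 * P)) ^ t * ((2 * 3 ^ d) ^ 6) ^ t) := by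
        gcongr
        apply le_self_pow₀ _ (by omega)
        have : (1:ℝ) ≤ 15 ^ d := one_le_pow₀ (by norm_num)
        linarith
    _ = ((C0 d P : ℕ) : ℝ) ^ t := by
        unfold C0
        push_cast
        rw [mul_pow (4 * 15 ^ d * 2 ^ (3 * d + 2 * P) : ℝ), mul_pow (4 * 15 ^ d : ℝ)]
        ring

lemma P_k (h : Par d N q P g γ) {Λ : Finset (Fin d → ℤ)} {a c : Fin d → ℤ}
    (hΛ : Λ = Finset.Icc a c) (i0 : Fin d) (k : ℕ) (hside : a i0 + sc d k ≤ c i0) (E0 : ℝ) :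
    ∀ x ∈ Λ, prob (fun ω : Λ → Fin N => ∃ E, |E - E0| ≤ win d N g k ∧
      Bad Λ γ (potential N Λ ω) E (sc d k) (kap d g k) x) ≤ 1 / (sc d k : ℝ) ^ P := by
  induction k with
  | zero => intro x hx; exact h.base_P hx E0
  | succ k ih =>
    intro x hx
    have hs := h.one_le_sc k
    have hst := sc_step d k
    have hNr := h.hNr
    rw [kap_succ]
    refine (step_P h.hN (by omega) (h.kap_pos k) (h.kap_lt_one k) (nn_step d k) (h.win_mono k)
      (by positivity) (ih (by omega)) (fun b => h.wegner_k k hΛ i0 hside E0 b) hx).trans ?_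
    have h1 := h.absorb k (2 * d) P (by have := h.hP; have := h.hq; omega)
    have h2 := h.wegner_num k
    linarith

lemma Q_k (h : Par d N q P g γ) {Λ : Finset (Fin d → ℤ)} {a c : Fin d → ℤ}
    (hΛ : Λ = Finset.Icc a c) (k : ℕ) :
    ∀ x ∈ Λ, ∀ y ∈ Λ, ¬ Nr x y (2 * sc d k) → prob (fun ω : Λ → Fin N => ∃ E,
      Bad Λ γ (potential N Λ ω) E (sc d k) (kap d g k) x ∧
      Bad Λ γ (potential N Λ ω) E (sc d k) (kap d g k) y) ≤ 1 / (sc d k : ℝ) ^ q := by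
  induction k with
  | zero => intro x hx y hy hxy; exact h.base_Q hx hy hxy
  | succ k ih =>
    intro x hx y hy hxy
    have hs := h.one_le_sc k
    have hst := sc_step d k
    have hNr := h.hNr
    have hside : ∃ i0, a i0 + sc d (k + 1) ≤ c i0 := by
      unfold Nr at hxy
      push Not at hxy
      obtain ⟨i0, hi⟩ := hxy
      refine ⟨i0, ?_⟩
      rw [hΛ, Finset.mem_Icc, Pi.le_def, Pi.le_def] at hx hy
      have := hx.1 i0; have := hx.2 i0; have := hy.1 i0; have := hy.2 i0
      rw [lt_abs] at hi
      omega
    obtain ⟨i0, hi0⟩ := hside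
    have hPk := fun E0 => h.P_k hΛ i0 (k + 1) hi0 E0
    rw [kap_succ] at hPk ⊢
    refine (step_Q h.hN h.γ_pos (by omega) (h.kap_pos k) (h.kap_lt_one k) (nn_step d k)
      (by positivity) (h.win_pin k) hPk ih hx hy hxy).trans ?_
    have h1 := h.absorb k (4 * d) q (by have := h.hq; omega)
    have h2 : 2 * ((2 * (sc d (k + 1) : ℝ) + 1) ^ d * ((6 * sc d k + 1) ^ d *
        (1 / (sc d (k + 1) : ℝ) ^ P))) ≤ 1 / 2 * (1 / (sc d (k + 1) : ℝ) ^ q) := by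
      have hS' : (4:ℝ) ≤ sc d (k + 1) := by exact_mod_cast (by omega : 4 ≤ sc d (k + 1))
      have b2 : (6 * (sc d k : ℝ) + 1) ≤ sc d (k + 1) := by
        exact_mod_cast (by omega : 6 * sc d k + 1 ≤ sc d (k + 1))
      set S : ℝ := (sc d (k + 1) : ℝ) with hSdef
      have b1 : 2 * S + 1 ≤ S ^ 2 := by nlinarith
      have e : S ^ P = S ^ q * (S * (S ^ 2) ^ d * S ^ d) := by rw [h.hP]; ring
      have e2 : 1 / 2 * (1 / S ^ q) = 1 / (2 * S ^ q) := by field_simp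
      rw [e2, mul_one_div, mul_div_assoc', mul_div_assoc', div_le_div_iff₀ (by positivity) (by positivity),
        one_mul, e]
      calc 2 * ((2 * S + 1) ^ d * (6 * (sc d k : ℝ) + 1) ^ d) * (2 * S ^ q)
          = S ^ q * (4 * (2 * S + 1) ^ d * (6 * (sc d k : ℝ) + 1) ^ d) := by ring
        _ ≤ _ := by gcongr
    linarith

end Par

end AL

namespace AL
variable {d : ℕ}

lemma expect_le {Ω : Type*} [Fintype Ω] (f : Ω → ℝ) (A : Ω → Prop) (c : ℝ) (hc : 0 ≤ c)
    (h1 : ∀ ω, f ω ≤ 1) (h2 : ∀ ω, ¬ A ω → f ω ≤ c) : expect f ≤ prob A + c := by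
  classical
  rw [prob_eq_sum]
  unfold expect
  have hs : ∑ ω, f ω ≤ ∑ ω, ((if A ω then (1:ℝ) else 0) + c) := by
    refine Finset.sum_le_sum fun ω _ => ?_
    split_ifs with hA
    · linarith [h1 ω]
    · linarith [h2 ω hA]
  rw [Finset.sum_add_distrib, Finset.sum_const, Finset.card_univ, nsmul_eq_mul] at hs
  rcases Nat.eq_zero_or_pos (Fintype.card Ω) with h0 | h0
  · rw [h0]; simpa using hc
  · have : (0:ℝ) < Fintype.card Ω := by exact_mod_cast h0
    rw [div_add' _ _ _ this.ne', div_le_div_iff_of_pos_right this]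
    rw [mul_comm c]
    convert hs using 2

section basis
variable {n : Type*} [Fintype n] [DecidableEq n]

lemma col_norm {f : n → n → ℝ} (hf : ∀ β β', ∑ z, f β z * f β' z = if β = β' then 1 else 0) (x : n) :
    ∑ β, f β x ^ 2 = 1 := by
  have h1 : (Matrix.of f) * (Matrix.of f).transpose = 1 := by
    ext i j
    rw [Matrix.mul_apply, Matrix.one_apply]
    exact hf i j
  have h2 := mul_eq_one_comm.1 h1
  have h3 := congrFun (congrFun h2 x) x
  rw [Matrix.mul_apply, Matrix.one_apply, if_pos rfl] at h3
  rw [← h3]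
  refine Finset.sum_congr rfl fun β _ => ?_
  rw [sq]; rfl

lemma corr_le_one {f : n → n → ℝ} (hf : ∀ β β', ∑ z, f β z * f β' z = if β = β' then 1 else 0)
    (x y : n) : ∑ β, |f β x * f β y| ≤ 1 := by
  have h1 := col_norm hf x
  have h2 := col_norm hf y
  have : ∑ β, |f β x * f β y| ≤ ∑ β, (f β x ^ 2 + f β y ^ 2) / 2 := by
    refine Finset.sum_le_sum fun β _ => ?_
    rw [abs_mul]
    have := sq_nonneg (|f β x| - |f β y|)
    nlinarith [sq_abs (f β x), sq_abs (f β y)]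
  rw [← Finset.sum_div, Finset.sum_add_distrib, h1, h2] at this
  linarith

end basis

lemma good_eig {γ : ℝ} {v : (Fin d → ℤ) → ℝ} {Λ : Finset (Fin d → ℤ)} {f : Λ → ℝ} {μ : ℝ}
    (hf : (hamOn d γ v Λ).mulVec f = μ • f) {s : ℕ} {δ : ℝ} {x : Λ}
    (hg : Good Λ γ v μ s δ x) :
    |f x| ≤ δ * ∑ w : Λ, if (w : Fin d → ℤ) ∈ LB Λ x s then |f w| else 0 := by
  classical
  set u : (Fin d → ℤ) → ℝ := fun z => if h : z ∈ Λ then f ⟨z, h⟩ else 0 with hu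
  have huf : ∀ z : Λ, u z = f z := fun z => by simp [hu]
  have e : (fun y : Λ => u y) = f := funext huf
  have h := hg u (∑ w : Λ, if (w : Fin d → ℤ) ∈ LB Λ x s then |f w| else 0) ?_ ?_
  · rwa [huf] at h
  · intro w hw _
    have h1 := hamOn_mulVec γ v Λ u ⟨w, hw⟩
    rw [e, hf] at h1
    have h2 : (μ • f) ⟨w, hw⟩ = μ * u w := by
      rw [Pi.smul_apply, smul_eq_mul, ← huf]
    rw [h2] at h1
    unfold Sol
    dsimp only at h1
    linarith
  · intro w hw hn
    rw [huf ⟨w, hw⟩]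
    have := Finset.single_le_sum (f := fun w : Λ => if (w : Fin d → ℤ) ∈ LB Λ x s then |f w| else 0)
      (fun i _ => by split_ifs <;> positivity) (Finset.mem_univ (⟨w, hw⟩ : Λ))
    dsimp only at this
    rw [if_pos (mem_LB.2 ⟨hw, hn⟩)] at this
    exact this

lemma sum_LB_corr {Λ : Finset (Fin d → ℤ)} {f : Λ → Λ → ℝ}
    (hf : ∀ β β', ∑ z, f β z * f β' z = if β = β' then 1 else 0) (x y : Λ) (s : ℕ) {δ : ℝ} (hδ : 0 ≤ δ) :
    ∑ β, δ * (∑ w : Λ, if (w : Fin d → ℤ) ∈ LB Λ x s then |f β w| else 0) * |f β y| ≤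
      δ * (2 * s + 1) ^ d := by
  classical
  simp_rw [mul_assoc]
  rw [← Finset.mul_sum]
  gcongr
  simp_rw [Finset.sum_mul]
  rw [Finset.sum_comm]
  have h1 : ∀ w : Λ, ∑ β, (if (w : Fin d → ℤ) ∈ LB Λ x s then |f β w| else 0) * |f β y| ≤
      if (w : Fin d → ℤ) ∈ LB Λ x s then 1 else 0 := by
    intro w
    split_ifs with h
    · simp_rw [← abs_mul]; exact corr_le_one hf w y
    · simp
  refine (Finset.sum_le_sum fun w _ => h1 w).trans ?_
  rw [Finset.sum_coe_sort Λ (fun w => if w ∈ LB Λ x s then (1:ℝ) else 0), Finset.sum_boole]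
  have h2 : (Λ.filter fun w => w ∈ LB Λ x s).card ≤ (2 * s + 1) ^ d :=
    (Finset.card_le_card (fun w hw => (Finset.mem_filter.1 hw).2)).trans (card_LB Λ x s)
  exact_mod_cast h2

lemma corr_good {γ : ℝ} {v : (Fin d → ℤ) → ℝ} {Λ : Finset (Fin d → ℤ)} {f : Λ → Λ → ℝ}
    (hf : ∀ β β', ∑ z, f β z * f β' z = if β = β' then 1 else 0)
    (he : ∀ β, ∃ μ : ℝ, (hamOn d γ v Λ).mulVec (f β) = μ • f β)
    {s : ℕ} {δ : ℝ} (hδ : 0 ≤ δ) (x y : Λ)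
    (hg : ∀ E, Good Λ γ v E s δ x ∨ Good Λ γ v E s δ y) :
    ∑ β, |f β x * f β y| ≤ 2 * δ * (2 * s + 1) ^ d := by
  classical
  have hb := add_le_add (sum_LB_corr hf x y s hδ) (sum_LB_corr hf y x s hδ)
  rw [← Finset.sum_add_distrib] at hb
  refine (Finset.sum_le_sum fun β _ => ?_).trans (hb.trans (le_of_eq (by ring)))
  obtain ⟨μ, hμ⟩ := he β
  have p1 : ∀ x : Λ, 0 ≤ ∑ w : Λ, if (w : Fin d → ℤ) ∈ LB Λ x s then |f β w| else 0 :=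
    fun x => Finset.sum_nonneg fun i _ => by split_ifs <;> positivity
  rw [abs_mul]
  rcases hg μ with h | h
  · have h1 := mul_le_mul_of_nonneg_right (good_eig hμ h) (abs_nonneg (f β y))
    have h2 := mul_nonneg (mul_nonneg hδ (p1 y)) (abs_nonneg (f β x))
    linarith
  · have h1 := mul_le_mul_of_nonneg_right (good_eig hμ h) (abs_nonneg (f β x))
    have h2 := mul_nonneg (mul_nonneg hδ (p1 x)) (abs_nonneg (f β y))
    linarith

lemma dist1_le {x y : Fin d → ℤ} {r : ℕ} (h : Nr x y r) : dist1 x y ≤ d * r := by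
  unfold dist1
  refine (Finset.sum_le_card_nsmul _ _ r fun i _ => ?_).trans (by simp)
  have := h i
  rw [abs_le] at this
  omega

lemma le_sc (d k : ℕ) (hd : 1 ≤ d) : k ≤ sc d k := by
  induction k with
  | zero => exact Nat.zero_le _
  | succ k ih => have := sc_step d k; have := sc_ge d k; omega

lemma exists_scale (hd : 1 ≤ d) (x y : Fin d → ℤ) (h0 : ¬ Nr x y (2 * sc d 0)) :
    ∃ k, ¬ Nr x y (2 * sc d k) ∧ Nr x y (2 * sc d (k + 1)) := by
  by_contra hcon
  push Not at hcon
  have hall : ∀ k, ¬ Nr x y (2 * sc d k) := by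
    intro k
    induction k with
    | zero => exact h0
    | succ k ih => exact hcon k ih
  apply hall (dist1 x y)
  intro i
  have : (x i - y i).natAbs ≤ dist1 x y :=
    Finset.single_le_sum (f := fun i => (x i - y i).natAbs) (fun _ _ => Nat.zero_le _)
      (Finset.mem_univ i)
  have := le_sc d (dist1 x y) hd
  rw [abs_le]; omega

variable {N q P : ℕ} {g γ : ℝ}

lemma num_large (h : Par d N q P g γ) (k T : ℕ) (hq : 3 * T + 1 ≤ q) (hg1 : g * (4 * 3 ^ d * 8 ^ T) ≤ 1) :
    1 / (sc d k : ℝ) ^ q + 2 * kap d g k ^ 2 * (2 * sc d k + 1) ^ d ≤ 1 / (sc d k : ℝ) ^ (3 * T) := by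
  have hs := h.one_le_sc k
  have hsm := h.small
  have hg0 := h.hg0
  have hkl := h.kap_le k
  have hkp := h.kap_pos k
  set s := sc d k with hsd
  have hs2 : (4:ℝ) ≤ s := by exact_mod_cast (by omega : 4 ≤ s)
  have a1 : 1 / (s : ℝ) ^ q ≤ 1 / 2 * (1 / (s : ℝ) ^ (3 * T)) := by
    have e : 1 / 2 * (1 / (s : ℝ) ^ (3 * T)) = 1 / (2 * (s : ℝ) ^ (3 * T)) := by field_simp
    rw [e]
    apply one_div_le_one_div_of_le (by positivity)
    calc 2 * (s:ℝ) ^ (3 * T) ≤ s * s ^ (3 * T) := by gcongr; linarith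
      _ = s ^ (3 * T + 1) := by ring
      _ ≤ s ^ q := pow_le_pow_right₀ (by linarith) hq
  have k1 : kap d g k ^ 2 ≤ g ^ s := by
    calc kap d g k ^ 2 ≤ (g ^ (8 * s)) ^ 2 := by gcongr
      _ = g ^ (16 * s) := by ring
      _ ≤ g ^ s := pow_le_pow_of_le_one hg0.le hsm.2.2.2.2.le (by omega)
  have b1 : (2 * (s:ℝ) + 1) ≤ 3 ^ s := by
    have := one_add_mul_le_pow (a := (2:ℝ)) (by norm_num) s
    norm_num at this
    linarith
  have b2 : (s:ℝ) ≤ 2 ^ s := by exact_mod_cast (Nat.lt_two_pow_self).le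
  have a2 : 2 * kap d g k ^ 2 * (2 * s + 1) ^ d ≤ 1 / 2 * (1 / (s : ℝ) ^ (3 * T)) := by
    have e : 1 / 2 * (1 / (s : ℝ) ^ (3 * T)) = 1 / (2 * (s : ℝ) ^ (3 * T)) := by field_simp
    rw [e, le_div_iff₀ (by positivity)]
    calc 2 * kap d g k ^ 2 * (2 * s + 1) ^ d * (2 * (s:ℝ) ^ (3 * T))
        ≤ 2 * g ^ s * (3 ^ s) ^ d * (2 * (2 ^ s) ^ (3 * T)) := by gcongr
      _ = 4 * (g ^ s * (3 ^ d) ^ s * (8 ^ T) ^ s) := by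
          have : ((8:ℝ) ^ T) ^ s = (2 ^ s) ^ (3 * T) := by
            rw [show (8:ℝ) = 2 ^ 3 by norm_num, ← pow_mul, ← pow_mul, ← pow_mul]
            congr 1; ring
          rw [this]; ring
      _ ≤ 4 ^ s * (g ^ s * (3 ^ d) ^ s * (8 ^ T) ^ s) := by
          gcongr
          exact le_self_pow₀ (by norm_num) (by omega)
      _ = (g * (4 * 3 ^ d * 8 ^ T)) ^ s := by simp only [mul_pow]; ring
      _ ≤ 1 := pow_le_one₀ (by positivity) hg1
  linarith

lemma final (h : Par d N q P g γ) (T : ℕ) (hq : 3 * T + 1 ≤ q)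
    (hNM : 2 * (2 * d * sc d 0) ^ T ≤ N) (hg1 : g * (4 * 3 ^ d * 8 ^ T) ≤ 1)
    (hg2 : 64 * 9 ^ d * N * γ * ((2 * d * sc d 0 : ℕ) : ℝ) ^ T ≤ 1)
    {Λ : Finset (Fin d → ℤ)} (hΛ : IsRect Λ)
    (φ : (↥Λ → Fin N) → ↥Λ → ↥Λ → ℝ)
    (hf : ∀ ω β β', ∑ z, φ ω β z * φ ω β' z = if β = β' then 1 else 0)
    (he : ∀ ω β, ∃ μ : ℝ, (hamOn d γ (potential N Λ ω) Λ).mulVec (φ ω β) = μ • φ ω β)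
    (x y : Λ) :
    expect (fun ω => ∑ β, |φ ω β x * φ ω β y|) ≤
      1 / ((max (dist1 (x : Fin d → ℤ) (y : Fin d → ℤ)) 1 : ℕ) : ℝ) ^ T := by
  have hNr := h.hNr
  have hγ := h.γ_pos
  have hs0 := h.one_le_sc 0
  have hd := h.hd
  set D := max (dist1 (x : Fin d → ℤ) (y : Fin d → ℤ)) 1 with hD
  have hD1 : (1:ℝ) ≤ (D:ℝ) := by exact_mod_cast le_max_right _ _
  by_cases hxy : (x : Fin d → ℤ) = y
  · have : D = 1 := by rw [hD, hxy]; simp [dist1]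
    rw [this]
    have := expect_le (fun ω => ∑ β, |φ ω β x * φ ω β y|) (fun _ => False) 1 zero_le_one
      (fun ω => corr_le_one (hf ω) x y) (fun ω _ => corr_le_one (hf ω) x y)
    rw [prob_false] at this
    simpa using this
  by_cases h0 : Nr (x : Fin d → ℤ) y (2 * sc d 0)
  · have hDM : D ≤ 2 * d * sc d 0 := by
      have := dist1_le (r := 2 * sc d 0) (x := (x : Fin d → ℤ)) (y := y) (by exact_mod_cast h0)
      have : 1 ≤ 2 * d * sc d 0 := Nat.one_le_iff_ne_zero.2 (by positivity)
      refine max_le ?_ this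
      calc _ ≤ _ := by assumption
        _ = _ := by ring
    set M0 := 2 * d * sc d 0 with hM0
    have hM1 : (0:ℝ) < M0 := by
      have : (D:ℝ) ≤ M0 := by exact_mod_cast hDM
      linarith
    set δ : ℝ := 16 * N * 3 ^ d * γ with hδ
    have hδ0 : 0 ≤ δ := by positivity
    have h1 := expect_le (fun ω => ∑ β, |φ ω β x * φ ω β y|)
      (fun ω => |potential N Λ ω x - potential N Λ ω y| < 1 / N) (2 * δ * (2 * (1:ℕ) + 1) ^ d)
      (by positivity) (fun ω => corr_le_one (hf ω) x y) (by
        intro ω hω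
        refine corr_good (hf ω) (he ω) hδ0 x y fun E => ?_
        by_contra hcon
        push Not at hcon
        apply hω
        obtain ⟨w, hw, hn, hv⟩ := bad_near h.hN hγ h.hγd x.2 (by rw [pow_one]) hcon.1
        obtain ⟨w', hw', hn', hv'⟩ := bad_near h.hN hγ h.hγd y.2 (by rw [pow_one]) hcon.2
        have ew : w = x := by
          funext i; have := hn i; rw [abs_le] at this; push_cast at this; omega
        have ew' : w' = y := by
          funext i; have := hn' i; rw [abs_le] at this; push_cast at this; omega
        rw [ew] at hv; rw [ew'] at hv'
        have e : (1:ℝ) / N = 8 * (1 / (8 * N)) := by field_simp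
        have hp : (0:ℝ) < 1 / (8 * N) := by positivity
        rw [e, abs_lt]
        rw [abs_lt] at hv hv'
        constructor <;> linarith)
    have h2 := prob_eq_sites h.hN x.2 y.2 hxy
    have h3 : (1:ℝ) / N ≤ 1 / 2 * (1 / (M0:ℝ) ^ T) := by
      have e : 1 / 2 * (1 / (M0 : ℝ) ^ T) = 1 / (2 * (M0 : ℝ) ^ T) := by field_simp
      rw [e]
      apply one_div_le_one_div_of_le (by positivity)
      exact_mod_cast hNM
    have h4 : 2 * δ * (2 * (1:ℕ) + 1) ^ d ≤ 1 / 2 * (1 / (M0:ℝ) ^ T) := by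
      have e : 1 / 2 * (1 / (M0 : ℝ) ^ T) = 1 / (2 * (M0 : ℝ) ^ T) := by field_simp
      rw [e, le_div_iff₀ (by positivity)]
      refine le_trans (le_of_eq ?_) hg2
      have : (9:ℝ) ^ d = 3 ^ d * 3 ^ d := by rw [← mul_pow]; norm_num
      rw [this, hδ]; norm_num; ring
    have h5 : 1 / (M0:ℝ) ^ T ≤ 1 / (D:ℝ) ^ T := by gcongr
    linarith
  · obtain ⟨a, c, hac⟩ := hΛ
    obtain ⟨k, hk, hk'⟩ := exists_scale hd (x : Fin d → ℤ) y h0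
    have hs := h.one_le_sc k
    have hDM : D ≤ sc d k ^ 3 := by
      have h1 := dist1_le (r := 2 * sc d (k + 1)) (x := (x : Fin d → ℤ)) (y := y) (by exact_mod_cast hk')
      have h2 := sc_two hd k
      have h3 := sc_ge d k
      refine max_le (h1.trans ?_) (Nat.one_le_pow _ _ (by omega))
      calc d * (2 * sc d (k + 1)) = (2 * d) * sc d (k + 1) := by ring
        _ ≤ sc d k * sc d k ^ 2 := Nat.mul_le_mul (by omega) h2
        _ = _ := by ring
    have hQ := h.Q_k hac k x x.2 y y.2 hk
    have h1 := expect_le (fun ω => ∑ β, |φ ω β x * φ ω β y|)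
      (fun ω => ∃ E, Bad Λ γ (potential N Λ ω) E (sc d k) (kap d g k) x ∧
        Bad Λ γ (potential N Λ ω) E (sc d k) (kap d g k) y)
      (2 * kap d g k ^ 2 * (2 * sc d k + 1) ^ d)
      (by positivity) (fun ω => corr_le_one (hf ω) x y) (by
        intro ω hω
        refine corr_good (hf ω) (he ω) (sq_nonneg _) x y fun E => ?_
        by_contra hcon
        push Not at hcon
        exact hω ⟨E, hcon.1, hcon.2⟩)
    have h2 := num_large h k T hq hg1
    have h3 : 1 / (sc d k : ℝ) ^ (3 * T) ≤ 1 / (D:ℝ) ^ T := by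
      rw [pow_mul]
      have : (D:ℝ) ≤ (sc d k : ℝ) ^ 3 := by exact_mod_cast hDM
      gcongr
    linarith

end AL

/-- **Theorem 1.2, part 1** (decay of the eigenfunction correlator in mean).
For any choice, for each potential configuration, of an orthonormal basis of `ℝ^Λ`
consisting of eigenvectors of the Anderson Hamiltonian `H`, and any `x, y ∈ Λ`,
`𝔼 ∑_β |φ_β(x) φ_β(y)| ≤ (max(|x-y|,1))^{-(p/2-d-1)}`. -/
theorem eigenfunction_correlator_decay :
    ∀ d : ℕ, 1 ≤ d →
    ∃ p₀ : ℝ, ∀ p : ℝ, p₀ ≤ p →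
    ∃ N₀ : ℕ, ∀ N : ℕ, N₀ ≤ N →
    ∃ γ₀ : ℝ, 0 < γ₀ ∧ γ₀ < 1 ∧
    ∀ γ : ℝ, 0 < γ → γ ≤ γ₀ →
    ∀ Λ : Finset (Fin d → ℤ), IsRect Λ →
    ∀ φ : (↥Λ → Fin N) → ↥Λ → ↥Λ → ℝ,
    (∀ ω β β', ∑ z, φ ω β z * φ ω β' z = if β = β' then 1 else 0) →
    (∀ ω β, ∃ μ : ℝ, (hamOn d γ (potential N Λ ω) Λ).mulVec (φ ω β) = μ • φ ω β) →
    ∀ x y : ↥Λ,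
    expect (fun ω => ∑ β, |φ ω β x * φ ω β y|)
      ≤ ((max (dist1 (x : Fin d → ℤ) (y : Fin d → ℤ)) 1 : ℕ) : ℝ) ^ (-(p/2 - d - 1)) := by
  intro d hd
  refine ⟨0, fun p _ => ?_⟩
  obtain ⟨T, hT⟩ := exists_nat_ge (p / 2 - d - 1)
  set q := 3 * T + 24 * d + 1 with hq
  set P := q + 3 * d + 1 with hP
  set M0 := 2 * d * AL.sc d 0 with hM0
  refine ⟨2 + (2 * AL.sc d 0 + 1) ^ (2 * d) * (AL.sc d 0) ^ P + (AL.C0 d P) ^ 128 + 2 * M0 ^ T,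
    fun N hN => ?_⟩
  have hN2 : 2 ≤ N := by omega
  have hNr : (2:ℝ) ≤ N := by exact_mod_cast hN2
  have hdr : (1:ℝ) ≤ d := by exact_mod_cast hd
  set B : ℝ := 64 * N * d * 21 ^ d + 4 * 3 ^ d * 8 ^ T + 64 * 9 ^ d * N * (M0 : ℝ) ^ T with hB
  have hp1 : 0 ≤ 64 * (N:ℝ) * d * 21 ^ d := by positivity
  have hp2 : (4:ℝ) ≤ 4 * 3 ^ d * 8 ^ T := by
    have a1 : (1:ℝ) ≤ 3 ^ d := one_le_pow₀ (by norm_num)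
    have a2 : (1:ℝ) ≤ 8 ^ T := one_le_pow₀ (by norm_num)
    nlinarith
  have hp3 : 0 ≤ 64 * 9 ^ d * N * (M0 : ℝ) ^ T := by positivity
  have hB4 : 4 ≤ B := by linarith
  refine ⟨(1 / B) ^ 64, by positivity, ?_, ?_⟩
  · apply pow_lt_one₀ (by positivity) _ (by norm_num)
    rw [div_lt_one (by positivity)]; linarith
  intro γ hγ0 hγ Λ hΛ φ hf he x y
  obtain ⟨g, hg0, hgγ⟩ : ∃ g : ℝ, 0 < g ∧ g ^ 64 = γ := by
    refine ⟨γ ^ (1 / (64:ℝ)), Real.rpow_pos_of_pos hγ0 _, ?_⟩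
    rw [← Real.rpow_natCast, ← Real.rpow_mul hγ0.le]
    norm_num
  have hgB : g ≤ 1 / B := by
    rw [← hgγ] at hγ
    exact le_of_pow_le_pow_left₀ (by norm_num) (by positivity) hγ
  have hgB' : g * B ≤ 1 := by rwa [le_div_iff₀ (by positivity)] at hgB
  have hg1 : g ≤ 1 := by
    have : g * 4 ≤ g * B := by gcongr
    linarith
  have hγg : γ ≤ g := by
    rw [← hgγ]; exact pow_le_of_le_one hg0.le hg1 (by norm_num)
  have hpar : AL.Par d N q P g γ :=
    { hd := hd
      hN := hN2
      hg0 := hg0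
      hgB := le_trans (mul_le_mul_of_nonneg_left (by linarith) hg0.le) hgB'
      hγ := hgγ.symm
      hq := by omega
      hP := rfl
      hN1 := by omega
      hN2 := by omega }
  have hNM : 2 * M0 ^ T ≤ N := by omega
  have hfin := AL.final hpar T (by omega) hNM
    (le_trans (mul_le_mul_of_nonneg_left (by linarith) hg0.le) hgB')
    (by
      calc 64 * 9 ^ d * N * γ * (M0 : ℝ) ^ T = γ * (64 * 9 ^ d * N * (M0 : ℝ) ^ T) := by ring
        _ ≤ g * B := by
          apply mul_le_mul hγg (by linarith) hp3 hg0.le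
        _ ≤ 1 := hgB') hΛ φ hf he x y
  refine hfin.trans ?_
  have hD1 : (1:ℝ) ≤ ((max (dist1 (x : Fin d → ℤ) (y : Fin d → ℤ)) 1 : ℕ) : ℝ) := by
    exact_mod_cast le_max_right _ _
  rw [one_div, ← Real.rpow_natCast, ← Real.rpow_neg (by linarith)]
  exact Real.rpow_le_rpow_of_exponent_le hD1 (by linarith)
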